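/- arXiv:1804.09419 — 2 statements merged into one kernel-verified Lean document; each statement's English description precedes it below -/
import Mathlib

section
/- Let α,β,q1,q2>0 with α>β, 1<p<min{N/α, N/β}, q1+q2>p−1, q2<N(p−1)/(N−βp) and (αpq1+βpq2)/(q1+q2)<N. Let μ be a nonnegative Radon measure on ℝ^N with compact support such that μ(K) ≤ C·Cap_{I_{(αpq1+βpq2)/(q1+q2)}, (q1+q2)/(q1+q2−p+1)}(K) for every compact K⊂ℝ^N and some C>0. Let μ_n be the measure with density φ_n*μ, where {φ_n} is a sequence of mollifiers. Then for every t>1 the family of functions x ↦ (W_{α,p}[μ_n](x))^{q1}(W_{β,p}[μ_n](x))^{q2}, n∈ℕ, is equi-integrable on the ball B_t(0). -/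
open MeasureTheory Metric Set Filter Bornology
open scoped ENNReal NNReal Topology RealInnerProductSpace

noncomputable section

/-- Euclidean space `ℝ^N`. -/
abbrev Euc (N : ℕ) : Type := EuclideanSpace ℝ (Fin N)

/-- The `R`-truncated Wolff potential `W^R_{α,p}[μ](x)`; `R = ⊤` gives the full
Wolff potential `W_{α,p}[μ]`. -/
def wolff {N : ℕ} (α p : ℝ) (R : ℝ≥0∞) (μ : Measure (Euc N)) (x : Euc N) : ℝ≥0∞ :=
  ∫⁻ ρ in {ρ : ℝ | 0 < ρ ∧ ENNReal.ofReal ρ < R},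
    (μ (ball x ρ) / ENNReal.ofReal (ρ ^ ((N : ℝ) - α * p))) ^ (1 / (p - 1)) /
      ENNReal.ofReal ρ

/-- The `R`-truncated Riesz potential `I^R_β[μ](x)`; `R = ⊤` gives `I_β[μ]`. -/
def rieszPot {N : ℕ} (β : ℝ) (R : ℝ≥0∞) (μ : Measure (Euc N)) (x : Euc N) : ℝ≥0∞ :=
  ∫⁻ ρ in {ρ : ℝ | 0 < ρ ∧ ENNReal.ofReal ρ < R},
    μ (ball x ρ) / ENNReal.ofReal (ρ ^ ((N : ℝ) - β)) / ENNReal.ofReal ρ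

/-- The Riesz capacity `Cap_{I_α,p}`. -/
def rieszCap (N : ℕ) (α p : ℝ) (O : Set (Euc N)) : ℝ≥0∞ :=
  ⨅ (g : Euc N → ℝ≥0∞) (_ : Measurable g)
    (_ : ∀ x ∈ O, 1 ≤ rieszPot α ⊤ (volume.withDensity g) x),
    ∫⁻ x, g x ^ p

/-- The Bessel kernel of order `α` (up to the normalizing constant `c(N,α)`). -/
def besselKernel (N : ℕ) (α : ℝ) (x : Euc N) : ℝ :=
  ∫ t in Ioi (0 : ℝ),
    Real.exp (-(Real.pi * ‖x‖ ^ 2 / t) - t / (4 * Real.pi)) * t ^ ((α - (N : ℝ)) / 2) / t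

/-- The Bessel capacity `Cap_{G_α,p}`. -/
def besselCap (N : ℕ) (α p : ℝ) (O : Set (Euc N)) : ℝ≥0∞ :=
  ⨅ (g : Euc N → ℝ≥0∞) (_ : Measurable g)
    (_ : ∀ x ∈ O, 1 ≤ ∫⁻ y, ENNReal.ofReal (besselKernel N α (x - y)) * g y),
    ∫⁻ x, g x ^ p

/-- The `R`-truncated fractional maximal function `M^R_γ[μ]`. -/
def fracMax {N : ℕ} (γ : ℝ) (R : ℝ≥0∞) (μ : Measure (Euc N)) (x : Euc N) : ℝ≥0∞ :=
  ⨆ (t : ℝ) (_ : 0 < t) (_ : ENNReal.ofReal t < R),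
    μ (ball x t) / ENNReal.ofReal (t ^ ((N : ℝ) - γ))

/-- The potential `L^R_{α,s}[μ]`. -/
def Lpot {N : ℕ} (α s : ℝ) (R : ℝ≥0∞) (μ : Measure (Euc N)) (x : Euc N) : ℝ≥0∞ :=
  ∫⁻ t in {t : ℝ | 0 < t ∧ ENNReal.ofReal t < R},
    (μ (ball x t) / ENNReal.ofReal (t ^ ((N : ℝ) - α))) ^ s / ENNReal.ofReal t

/-- A mollifier: smooth, nonnegative, supported in the unit ball, of total mass one. -/
def IsMollifier {N : ℕ} (φ : Euc N → ℝ) : Prop :=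
  ContDiff ℝ (⊤ : ℕ∞) φ ∧ (∀ x, 0 ≤ φ x) ∧ tsupport φ ⊆ ball 0 1 ∧ (∫ x, φ x) = 1

/-- The measure with density `φ_n * μ`, where `φ_n(x) = n^N φ(n x)`. -/
def mollified {N : ℕ} (φ : Euc N → ℝ) (n : ℕ) (μ : Measure (Euc N)) : Measure (Euc N) :=
  volume.withDensity fun x =>
    ENNReal.ofReal (∫ y, (n : ℝ) ^ (N : ℕ) * φ ((n : ℝ) • (x - y)) ∂μ)

/-- Real powers of two in `ℝ≥0∞`. -/
def twoPow (x : ℝ) : ℝ≥0∞ := (2 : ℝ≥0∞) ^ x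

lemma twoPow_ne_top (x : ℝ) : twoPow x ≠ ⊤ := by simp [twoPow, ENNReal.rpow_eq_top_iff]

lemma twoPow_zero : twoPow 0 = 1 := by simp [twoPow]

lemma twoPow_one : twoPow 1 = 2 := by simp [twoPow]

lemma twoPow_add (x y : ℝ) : twoPow (x + y) = twoPow x * twoPow y :=
  ENNReal.rpow_add _ _ (by simp) (by simp)

lemma twoPow_rpow (x y : ℝ) : twoPow x ^ y = twoPow (x * y) := by
  simp [twoPow, ENNReal.rpow_mul]

lemma twoPow_le {x y : ℝ} (h : x ≤ y) : twoPow x ≤ twoPow y :=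
  ENNReal.rpow_le_rpow_of_exponent_le (by simp) h

lemma twoPow_mul_neg (x : ℝ) : twoPow x * twoPow (-x) = 1 := by
  rw [← twoPow_add]; simp [twoPow_zero]

lemma twoPow_neg (x : ℝ) : twoPow (-x) = (twoPow x)⁻¹ := by
  simp [twoPow, ENNReal.rpow_neg]

lemma ofReal_two_rpow (x : ℝ) : ENNReal.ofReal ((2 : ℝ) ^ x) = twoPow x := by
  rw [← ENNReal.ofReal_rpow_of_pos (by norm_num)]; simp [twoPow]

lemma tsum_twoPow_lt_top {δ : ℝ} (hδ : 0 < δ) : ∑' n : ℕ, twoPow (-(δ * n)) < ⊤ := by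
  have h : ∀ n : ℕ, twoPow (-(δ * n)) = (twoPow (-δ)) ^ n := by
    intro n
    rw [← ENNReal.rpow_natCast, twoPow_rpow]; ring_nf
  simp_rw [h]
  rw [ENNReal.tsum_geometric]
  have : twoPow (-δ) < 1 := by
    rw [twoPow, ENNReal.rpow_neg, ENNReal.inv_lt_one]
    exact ENNReal.one_lt_rpow (by simp) hδ
  rw [lt_top_iff_ne_top]
  simpa [ENNReal.inv_eq_top, tsub_eq_zero_iff_le] using this

/-- Summing pointwise bounds on `q`-th powers. -/
lemma tsum_rpow_mul_le {ι : Type*} {q : ℝ} (hq : 0 < q) (a x : ι → ℝ≥0∞) (c d : ℝ≥0∞)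
    (h : ∀ j, a j ^ q * c ≤ x j * d) :
    (∑' j, a j) ^ q * c ≤ (∑' j, x j ^ (1 / q)) ^ q * d := by
  have hq' : 0 ≤ 1 / q := by positivity
  have key : (∑' j, a j) * c ^ (1 / q) ≤ (∑' j, x j ^ (1 / q)) * d ^ (1 / q) := by
    rw [← ENNReal.tsum_mul_right, ← ENNReal.tsum_mul_right]
    refine ENNReal.tsum_le_tsum fun j => ?_
    have := ENNReal.rpow_le_rpow (h j) hq'
    rwa [ENNReal.mul_rpow_of_nonneg _ _ hq', ENNReal.mul_rpow_of_nonneg _ _ hq',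
      ← ENNReal.rpow_mul, mul_one_div_cancel hq.ne', ENNReal.rpow_one] at this
  have := ENNReal.rpow_le_rpow key hq.le
  rwa [ENNReal.mul_rpow_of_nonneg _ _ hq.le, ENNReal.mul_rpow_of_nonneg _ _ hq.le,
    ← ENNReal.rpow_mul, ← ENNReal.rpow_mul, one_div_mul_cancel hq.ne', ENNReal.rpow_one,
    ENNReal.rpow_one] at this

lemma tsum_rpow_le_weighted {q ε : ℝ} (hq : 0 < q) (a : ℕ → ℝ≥0∞) :
    (∑' j, a j) ^ q ≤
      (∑' j : ℕ, twoPow (-(ε / q * j))) ^ q * ∑' j : ℕ, twoPow (ε * j) * a j ^ q := by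
  have := tsum_rpow_mul_le hq a (fun j : ℕ => twoPow (-(ε * j))) 1
    (∑' j : ℕ, twoPow (ε * j) * a j ^ q) (fun j => ?_)
  · rw [mul_one] at this
    refine this.trans_eq ?_
    congr 2
    refine tsum_congr fun j => ?_
    rw [twoPow_rpow]; ring_nf
  · calc a j ^ q * 1 = twoPow (-(ε * j)) * (twoPow (ε * j) * a j ^ q) := by
          rw [← mul_assoc, mul_comm (twoPow _) (twoPow _), twoPow_mul_neg, one_mul, mul_one]
      _ ≤ _ := by
          gcongr
          exact ENNReal.le_tsum (f := fun j : ℕ => twoPow (ε * j) * a j ^ q) j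

lemma tsum_twoPow_dist_le (δ : ℝ) (i : ℕ) :
    ∑' j : ℕ, twoPow (-(δ * |(j : ℝ) - i|)) ≤ 2 * ∑' n : ℕ, twoPow (-(δ * n)) := by
  rw [← Summable.sum_add_tsum_nat_add' (k := i) ENNReal.summable, two_mul, add_comm]
  refine add_le_add (le_of_eq (tsum_congr fun n => ?_)) ?_
  · push_cast
    rw [add_sub_cancel_right, abs_of_nonneg (by positivity)]
  · rw [← Finset.sum_range_reflect]
    refine (Finset.sum_le_sum (g := fun n : ℕ => twoPow (-(δ * ((n + 1 : ℕ) : ℝ))))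
      fun j hj => le_of_eq ?_).trans ?_
    · have hj : j < i := Finset.mem_range.1 hj
      have : ((i - 1 - j : ℕ) : ℝ) - i = -((j : ℝ) + 1) := by
        rw [Nat.sub_sub, Nat.cast_sub (by omega)]; push_cast; ring
      rw [this, abs_neg, abs_of_nonneg (by positivity)]
      push_cast; rfl
    · refine (ENNReal.sum_le_tsum _).trans ?_
      exact ENNReal.tsum_comp_le_tsum_of_injective (add_left_injective 1)
        (fun n : ℕ => twoPow (-(δ * n)))

/-- A product of powers of two sums, weighted towards opposite ends, is controlled by the
part of the double sum in which the second index dominates the first. -/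
lemma exists_tsum_rpow_mul_tsum_rpow_le {κ κ' q1 q2 ε : ℝ}
    (hq1 : 0 < q1) (hq2 : 0 < q2) (hε : 0 < ε) (h1 : ε ≤ κ * q1) (h2 : ε ≤ κ' * q2) :
    ∃ K : ℝ≥0∞, K ≠ ⊤ ∧ ∀ m a b : ℕ → ℝ≥0∞,
      (∀ j : ℕ, a j = twoPow (-(κ * j)) * m j) → (∀ j : ℕ, b j = twoPow (κ' * j) * m j) →
      (∑' j, a j) ^ q1 * (∑' k, b k) ^ q2 ≤
        K * ∑' j, ∑' n : ℕ, twoPow (ε * n) * (a j ^ q1 * b (j + n) ^ q2) +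
          ∑' j, m j ^ (q1 + q2) := by
  have hfin : ∀ q : ℝ, 0 < q →
      (2 * ∑' n : ℕ, twoPow (-(ε / q * n))) ^ q ≠ ⊤ := fun q hq =>
    ENNReal.rpow_ne_top_of_nonneg hq.le
      (ENNReal.mul_ne_top (by simp) (tsum_twoPow_lt_top (by positivity)).ne)
  refine ⟨(2 * ∑' n : ℕ, twoPow (-(ε / q1 * n))) ^ q1 *
    ((2 * ∑' n : ℕ, twoPow (-(ε / q2 * n))) ^ q2 * twoPow (q1 + q2)),
    ENNReal.mul_ne_top (hfin _ hq1) (ENNReal.mul_ne_top (hfin _ hq2) (twoPow_ne_top _)), ?_⟩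
  intro m a b ha hb
  set T := ∑' j, ∑' n : ℕ, twoPow (ε * n) * (a j ^ q1 * b (j + n) ^ q2) with hT
  rcases eq_or_ne (⨆ j, m j) 0 with h0 | h0
  · have : ∀ j, a j = 0 := fun j => by
      have hj : m j = 0 := iSup_eq_bot.1 h0 j
      rw [ha, hj, mul_zero]
    simp [this, hq1]
  rcases eq_or_ne (⨆ j, m j) ⊤ with ht | ht
  · have : ∑' j, m j ^ (q1 + q2) = ⊤ := by
      by_contra hne
      have : (⨆ j, m j) ≤ (∑' j, m j ^ (q1 + q2)) ^ (1 / (q1 + q2)) := by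
        refine iSup_le fun j => ?_
        have := ENNReal.rpow_le_rpow
          (ENNReal.le_tsum (f := fun j => m j ^ (q1 + q2)) j)
          (show 0 ≤ 1 / (q1 + q2) by positivity)
        rwa [← ENNReal.rpow_mul, mul_one_div_cancel (by positivity), ENNReal.rpow_one] at this
      rw [ht, top_le_iff] at this
      exact ENNReal.rpow_ne_top_of_nonneg (by positivity) hne this
    simp [this]
  obtain ⟨i, hi⟩ : ∃ i, (⨆ j, m j) / 2 < m i := lt_iSup_iff.1 (ENNReal.half_lt_self h0 ht)
  have hm : ∀ j, m j ≤ 2 * m i := fun j => by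
    have h := (ENNReal.div_lt_iff (by simp) (by simp)).1 hi
    rw [mul_comm]
    exact (le_iSup m j).trans h.le
  refine le_add_right ?_
  have hA : ∀ j, ∃ j' ≤ i, j' ≤ j ∧ (|(j : ℝ) - i| = (j - j') + (i - j')) ∧
      a j ≤ twoPow (1 + -(κ * (j - j' : ℝ))) * a j' := by
    intro j
    rcases le_total j i with h | h
    · refine ⟨j, h, le_rfl, ?_, ?_⟩
      · rw [abs_sub_comm, abs_of_nonneg (by simpa using h)]; ring
      · rw [sub_self, mul_zero, neg_zero, add_zero, twoPow_one]
        exact le_mul_of_one_le_left (by simp) (by norm_num)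
    · refine ⟨i, le_rfl, h, ?_, ?_⟩
      · rw [abs_of_nonneg (by simpa using h)]; ring
      · rw [ha, ha, ← mul_assoc, ← twoPow_add]
        calc _ ≤ twoPow (-(κ * j)) * (2 * m i) := by gcongr; exact hm j
          _ = _ := by
            rw [← mul_assoc, ← twoPow_one, ← twoPow_add]; ring_nf
  have hB : ∀ k, ∃ k' ≥ i, k ≤ k' ∧ (|(k : ℝ) - i| = (k' - k) + (k' - i)) ∧
      b k ≤ twoPow (1 + -(κ' * (k' - k : ℝ))) * b k' := by
    intro k
    rcases le_total k i with h | h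
    · refine ⟨i, le_rfl, h, ?_, ?_⟩
      · rw [abs_sub_comm, abs_of_nonneg (by simpa using h)]; ring
      · rw [hb, hb, ← mul_assoc, ← twoPow_add]
        calc _ ≤ twoPow (κ' * k) * (2 * m i) := by gcongr; exact hm k
          _ = _ := by
            rw [← mul_assoc, ← twoPow_one, ← twoPow_add]; ring_nf
    · refine ⟨k, h, le_rfl, ?_, ?_⟩
      · rw [abs_of_nonneg (by simpa using h)]; ring
      · rw [sub_self, mul_zero, neg_zero, add_zero, twoPow_one]
        exact le_mul_of_one_le_left (by simp) (by norm_num)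
  have hab : ∀ j k, a j ^ q1 * b k ^ q2 ≤
      twoPow (-(ε * |(j : ℝ) - i|)) * (twoPow (-(ε * |(k : ℝ) - i|)) *
        (twoPow (q1 + q2) * T)) := by
    intro j k
    obtain ⟨j', hj'i, hjle, hj, haj⟩ := hA j
    obtain ⟨k', hik', hkk', hk, hbk⟩ := hB k
    have hTle : twoPow (ε * ((k' : ℝ) - j')) * (a j' ^ q1 * b k' ^ q2) ≤ T := by
      have e1 := ENNReal.le_tsum
        (f := fun j => ∑' n : ℕ, twoPow (ε * n) * (a j ^ q1 * b (j + n) ^ q2)) j'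
      have e2 := ENNReal.le_tsum
        (f := fun n : ℕ => twoPow (ε * n) * (a j' ^ q1 * b (j' + n) ^ q2)) (k' - j')
      have hle : j' ≤ k' := hj'i.trans hik'
      simp only [Nat.add_sub_of_le hle, Nat.cast_sub hle] at e2
      exact e2.trans e1
    have hjle_cast : (j' : ℝ) ≤ j := by exact_mod_cast hjle
    have hkk'' : (k : ℝ) ≤ k' := by exact_mod_cast hkk'
    calc a j ^ q1 * b k ^ q2
        ≤ (twoPow (1 + -(κ * (j - j' : ℝ))) * a j') ^ q1 *
          (twoPow (1 + -(κ' * (k' - k : ℝ))) * b k') ^ q2 := by gcongr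
      _ = twoPow ((1 + -(κ * (j - j' : ℝ))) * q1 + (1 + -(κ' * (k' - k : ℝ))) * q2) *
          (a j' ^ q1 * b k' ^ q2) := by
          rw [ENNReal.mul_rpow_of_nonneg _ _ hq1.le, ENNReal.mul_rpow_of_nonneg _ _ hq2.le,
            twoPow_rpow, twoPow_rpow, twoPow_add]
          ring
      _ ≤ twoPow (q1 + q2 - ε * (j - j') - ε * (k' - k)) * (a j' ^ q1 * b k' ^ q2) := by
          gcongr
          apply twoPow_le
          nlinarith [mul_le_mul_of_nonneg_right h1 (sub_nonneg.2 hjle_cast),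
            mul_le_mul_of_nonneg_right h2 (sub_nonneg.2 hkk'')]
      _ = twoPow (-(ε * |(j : ℝ) - i|)) * (twoPow (-(ε * |(k : ℝ) - i|)) *
        (twoPow (q1 + q2) * (twoPow (ε * ((k' : ℝ) - j')) * (a j' ^ q1 * b k' ^ q2)))) := by
          rw [hj, hk]
          simp only [← mul_assoc, ← twoPow_add]
          ring_nf
      _ ≤ _ := by gcongr
  have step : ∀ k, (∑' j, a j) ^ q1 * b k ^ q2 ≤
      (2 * ∑' n : ℕ, twoPow (-(ε / q1 * n))) ^ q1 * (twoPow (-(ε * |(k : ℝ) - i|)) *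
        (twoPow (q1 + q2) * T)) := by
    intro k
    refine (tsum_rpow_mul_le hq1 a _ _ _ (fun j => hab j k)).trans ?_
    gcongr
    refine le_trans (le_of_eq (tsum_congr fun j => ?_)) (tsum_twoPow_dist_le (ε / q1) i)
    rw [twoPow_rpow]; ring_nf
  have step2 := tsum_rpow_mul_le hq2 b (fun k : ℕ => twoPow (-(ε * |(k : ℝ) - i|)))
    ((∑' j, a j) ^ q1)
    ((2 * ∑' n : ℕ, twoPow (-(ε / q1 * n))) ^ q1 * (twoPow (q1 + q2) * T))
    (fun k => by rw [mul_comm]; refine (step k).trans_eq ?_; ring)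
  rw [mul_comm]
  refine step2.trans ?_
  calc _ ≤ (2 * ∑' n : ℕ, twoPow (-(ε / q2 * n))) ^ q2 *
      ((2 * ∑' n : ℕ, twoPow (-(ε / q1 * n))) ^ q1 * (twoPow (q1 + q2) * T)) := by
        gcongr
        refine le_trans (le_of_eq (tsum_congr fun j => ?_)) (tsum_twoPow_dist_le (ε / q2) i)
        rw [twoPow_rpow]; ring_nf
    _ = _ := by ring

/-- The dyadic radius `2⁻ʲ`. -/
def dyadicRadius (j : ℕ) : ℝ := (1 / 2) ^ j

lemma dyadicRadius_pos (j : ℕ) : 0 < dyadicRadius j := by unfold dyadicRadius; positivity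

lemma dyadicRadius_eq (j : ℕ) : dyadicRadius j = (2 : ℝ) ^ (-(j : ℝ)) := by
  rw [dyadicRadius, Real.rpow_neg (by norm_num), Real.rpow_natCast, one_div, inv_pow]

lemma dyadicRadius_add (j n : ℕ) :
    dyadicRadius (j + n) = dyadicRadius n * dyadicRadius j := by
  rw [dyadicRadius, pow_add, mul_comm]; rfl

lemma dyadicRadius_le_one (j : ℕ) : dyadicRadius j ≤ 1 :=
  pow_le_one₀ (by norm_num) (by norm_num)

lemma ofReal_dyadicRadius_rpow (j : ℕ) (e : ℝ) :
    ENNReal.ofReal (dyadicRadius j ^ e) = twoPow (-(e * j)) := by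
  rw [dyadicRadius_eq, ← Real.rpow_mul (by norm_num), ofReal_two_rpow]; ring_nf

section Potentials

variable {N : ℕ}

lemma measurable_measure_ball (ν : Measure (Euc N)) [SFinite ν] (r : ℝ) :
    Measurable fun x => ν (ball x r) := by
  have hS : MeasurableSet {q : Euc N × Euc N | dist q.2 q.1 < r} :=
    (isOpen_lt (by fun_prop) (by fun_prop)).measurableSet
  exact measurable_measure_prodMk_left hS

lemma lintegral_mul_measure_ball (ν : Measure (Euc N)) [IsFiniteMeasure ν]
    {g : Euc N → ℝ≥0∞} (hg : Measurable g) (s : ℝ) :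
    ∫⁻ x, g x * ν (ball x s) = ∫⁻ z, ∫⁻ x in ball z s, g x ∂volume ∂ν := by
  have hS : MeasurableSet {q : Euc N × Euc N | dist q.2 q.1 < s} :=
    (isOpen_lt (by fun_prop) (by fun_prop)).measurableSet
  have h1 : ∀ x, g x * ν (ball x s) =
      ∫⁻ z, ({q : Euc N × Euc N | dist q.2 q.1 < s}.indicator fun q => g q.1) (x, z) ∂ν := by
    intro x
    rw [← lintegral_indicator_const measurableSet_ball]
    rfl
  simp_rw [h1]
  rw [lintegral_lintegral_swap (f := fun x z =>
    ({q : Euc N × Euc N | dist q.2 q.1 < s}.indicator fun q => g q.1) (x, z))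
    ((hg.comp measurable_fst).indicator hS).aemeasurable]
  refine lintegral_congr fun z => ?_
  rw [← lintegral_indicator measurableSet_ball]
  refine lintegral_congr fun x => ?_
  simp only [indicator, mem_ofPred_eq, mem_ball, dist_comm]

lemma volume_ball_dyadic (x y : Euc N) (n : ℕ) (r : ℝ) :
    volume (ball x (dyadicRadius n * r)) = twoPow (-(N * n : ℝ)) * volume (ball y r) := by
  rw [Measure.addHaar_ball_mul_of_pos _ _ (dyadicRadius_pos n), Measure.addHaar_ball_center _ y]
  congr 1
  rw [← ofReal_dyadicRadius_rpow, finrank_euclideanSpace_fin, Real.rpow_natCast]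

lemma lintegral_measure_ball (ν : Measure (Euc N)) [IsFiniteMeasure ν] (s : ℝ) :
    ∫⁻ x, ν (ball x s) = volume (ball (0 : Euc N) s) * ν univ := by
  have := lintegral_mul_measure_ball ν (g := fun _ => 1) measurable_const s
  simp only [one_mul, lintegral_const, Measure.restrict_apply_univ] at this
  rw [this]
  simp_rw [Measure.addHaar_ball_center volume _ s, lintegral_const]

/-- Averaging over balls of radius `r` moves the small ball to the larger scale. -/
lemma lintegral_measure_ball_rpow_mul_le (ν : Measure (Euc N)) [IsFiniteMeasure ν]
    {θ r : ℝ} (hθ : 0 ≤ θ) (hr : 0 < r) (n : ℕ) :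
    ∫⁻ x, ν (ball x r) ^ θ * ν (ball x (dyadicRadius n * r)) ≤
      twoPow (-(N * n : ℝ)) * ∫⁻ x, ν (ball x (4 * r)) ^ (θ + 1) := by
  have hs : dyadicRadius n * r ≤ r := mul_le_of_le_one_left hr.le (dyadicRadius_le_one n)
  rw [lintegral_mul_measure_ball ν ((measurable_measure_ball ν r).pow_const θ)]
  calc ∫⁻ z, ∫⁻ x in ball z (dyadicRadius n * r), ν (ball x r) ^ θ ∂volume ∂ν
      ≤ ∫⁻ z, twoPow (-(N * n : ℝ)) *
          ∫⁻ x in ball z r, ν (ball x (4 * r)) ^ θ ∂volume ∂ν := by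
        refine lintegral_mono fun z => ?_
        calc ∫⁻ x in ball z (dyadicRadius n * r), ν (ball x r) ^ θ
            ≤ ∫⁻ x in ball z (dyadicRadius n * r), ν (ball z (2 * r)) ^ θ := by
              refine setLIntegral_mono' measurableSet_ball fun x hx => ?_
              gcongr
              refine ball_subset_ball' ?_
              have := mem_ball.1 hx
              linarith
          _ = twoPow (-(N * n : ℝ)) * ∫⁻ x in ball z r, ν (ball z (2 * r)) ^ θ := by
              rw [setLIntegral_const, setLIntegral_const, volume_ball_dyadic z z n r]
              ring
          _ ≤ _ := by
              refine mul_le_mul' le_rfl (setLIntegral_mono' measurableSet_ball fun x hx => ?_)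
              gcongr
              refine ball_subset_ball' ?_
              have := mem_ball'.1 hx
              linarith
    _ = twoPow (-(N * n : ℝ)) * ∫⁻ x, ν (ball x (4 * r)) ^ θ * ν (ball x r) := by
        rw [lintegral_const_mul' _ _ (twoPow_ne_top _), lintegral_mul_measure_ball ν
          ((measurable_measure_ball ν _).pow_const θ)]
    _ ≤ _ := by
        gcongr with x
        rw [ENNReal.rpow_add_of_nonneg _ _ hθ zero_le_one, ENNReal.rpow_one]
        gcongr
        linarith

lemma lintegral_measure_ball_rpow_mul_rpow_le (ν : Measure (Euc N)) [IsFiniteMeasure ν]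
    {σ1 σ2 l r : ℝ} (h1 : 0 ≤ σ1) (hs : 1 ≤ σ1 + σ2) (hl : 0 < l) (hl1 : l ≤ 1)
    (hlσ : l ≤ σ2) (hr : 0 < r) (n : ℕ) :
    ∫⁻ x, ν (ball x r) ^ σ1 * ν (ball x (dyadicRadius n * r)) ^ σ2 ≤
      twoPow (-(N * l * n : ℝ)) * ∫⁻ x, ν (ball x (4 * r)) ^ (σ1 + σ2) := by
  have hsr : dyadicRadius n * r ≤ r := mul_le_of_le_one_left hr.le (dyadicRadius_le_one n)
  calc ∫⁻ x, ν (ball x r) ^ σ1 * ν (ball x (dyadicRadius n * r)) ^ σ2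
      ≤ ∫⁻ x, (ν (ball x r) ^ (σ1 + σ2 - 1) * ν (ball x (dyadicRadius n * r))) ^ l *
          (ν (ball x r) ^ (σ1 + σ2)) ^ (1 - l) := by
        refine lintegral_mono fun x => ?_
        set A := ν (ball x r)
        set B := ν (ball x (dyadicRadius n * r))
        have hBA : B ≤ A := measure_mono (ball_subset_ball hsr)
        calc A ^ σ1 * B ^ σ2 = A ^ σ1 * (B ^ (σ2 - l) * B ^ l) := by
              rw [← ENNReal.rpow_add_of_nonneg _ _ (by linarith) hl.le]; ring_nf
          _ ≤ A ^ σ1 * (A ^ (σ2 - l) * B ^ l) := by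
              gcongr
          _ = A ^ (σ1 + σ2 - l) * B ^ l := by
              rw [← mul_assoc, ← ENNReal.rpow_add_of_nonneg _ _ h1 (by linarith)]; ring_nf
          _ = _ := by
              rw [ENNReal.mul_rpow_of_nonneg _ _ hl.le, mul_right_comm, ← ENNReal.rpow_mul,
                ← ENNReal.rpow_mul, ← ENNReal.rpow_add_of_nonneg]
              · ring_nf
              · exact mul_nonneg (by linarith) hl.le
              · exact mul_nonneg (by linarith) (by linarith)
    _ ≤ (∫⁻ x, ν (ball x r) ^ (σ1 + σ2 - 1) * ν (ball x (dyadicRadius n * r))) ^ l *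
          (∫⁻ x, ν (ball x r) ^ (σ1 + σ2)) ^ (1 - l) := by
        refine ENNReal.lintegral_mul_norm_pow_le ?_ ?_ hl.le (by linarith) (by ring)
        · exact (((measurable_measure_ball ν _).pow_const _).mul
            (measurable_measure_ball ν _)).aemeasurable
        · exact ((measurable_measure_ball ν _).pow_const _).aemeasurable
    _ ≤ (twoPow (-(N * n : ℝ)) * ∫⁻ x, ν (ball x (4 * r)) ^ (σ1 + σ2 - 1 + 1)) ^ l *
          (∫⁻ x, ν (ball x (4 * r)) ^ (σ1 + σ2)) ^ (1 - l) := by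
        gcongr
        · exact lintegral_measure_ball_rpow_mul_le ν (by linarith) hr n
        · linarith
    _ = _ := by
        rw [sub_add_cancel, ENNReal.mul_rpow_of_nonneg _ _ hl.le, mul_assoc,
          ← ENNReal.rpow_add_of_nonneg _ _ hl.le (by linarith), twoPow_rpow]
        simp only [add_sub_cancel, ENNReal.rpow_one]
        ring_nf

/-- The sum over dyadic scales `2⁻ʲ`, `j ≥ J`, of `2^{cj} ν(B(x, 2⁻ʲ))^w`. -/
def scaleSum (ν : Measure (Euc N)) (c w : ℝ) (J : ℕ) (x : Euc N) : ℝ≥0∞ :=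
  ∑' j : ℕ, if j < J then 0 else twoPow (c * j) * ν (ball x (dyadicRadius j)) ^ w

/-- The energy of `ν` at the dyadic scale `2⁻ʲ`. -/
def scaleEnergy (ν : Measure (Euc N)) (e s : ℝ) (j : ℕ) : ℝ≥0∞ :=
  twoPow (e * j) * ∫⁻ y, ν (ball y (4 * dyadicRadius j)) ^ s

lemma measurable_scaleSum (ν : Measure (Euc N)) [IsFiniteMeasure ν] (c w : ℝ) (J : ℕ) :
    Measurable (scaleSum ν c w J) := by
  refine Measurable.tsum fun j => ?_
  split_ifs
  · exact measurable_const
  · exact ((measurable_measure_ball ν _).pow_const w).const_mul _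

lemma scaleSum_le (ν : Measure (Euc N)) (c w : ℝ) (J : ℕ) (x : Euc N) :
    scaleSum ν c w J x ≤ scaleSum ν c w 0 x := by
  refine ENNReal.tsum_le_tsum fun j => ?_
  split_ifs <;> simp_all

lemma twoPow_mul_lintegral_le_scaleEnergy (ν : Measure (Euc N)) {e s : ℝ} (hs : 0 ≤ s)
    (j : ℕ) : twoPow (e * j) * ∫⁻ y, ν (ball y (dyadicRadius j)) ^ s ≤ scaleEnergy ν e s j := by
  have := dyadicRadius_pos j
  unfold scaleEnergy
  gcongr
  linarith

lemma exists_lintegral_scaleSum_mul_le {a b G w q1 q2 l : ℝ} (haG : a < G) (hGb : G < b)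
    (hw : 0 < w) (hq1 : 0 < q1) (hq2 : 0 < q2) (hs : 1 ≤ (q1 + q2) * w)
    (hG : G * (q1 + q2) = a * q1 + b * q2) (hl : 0 < l) (hl1 : l ≤ 1) (hlq : l ≤ q2 * w)
    (hb : b * q2 < N * l) :
    ∃ K : ℝ≥0∞, K ≠ ⊤ ∧ ∀ ν : Measure (Euc N), IsFiniteMeasure ν → ∀ J : ℕ,
      ∫⁻ x, scaleSum ν a w J x ^ q1 * scaleSum ν b w J x ^ q2 ≤
        K * ∑' j, if j < J then 0 else scaleEnergy ν (G * (q1 + q2)) ((q1 + q2) * w) j := by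
  set δ := (N * l - b * q2) / 2 with hδ
  have hδ0 : 0 < δ := by rw [hδ]; linarith
  set ε := min (min ((G - a) * q1) ((b - G) * q2)) δ with hε
  have hε0 : 0 < ε :=
    lt_min (lt_min (mul_pos (by linarith) hq1) (mul_pos (by linarith) hq2)) hδ0
  have hε1 : ε ≤ (G - a) * q1 := (min_le_left _ _).trans (min_le_left _ _)
  have hε2 : ε ≤ (b - G) * q2 := (min_le_left _ _).trans (min_le_right _ _)
  have hε3 : ε ≤ δ := min_le_right _ _
  obtain ⟨K, hK, hKle⟩ := exists_tsum_rpow_mul_tsum_rpow_le hq1 hq2 hε0 hε1 hε2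
  refine ⟨K * ∑' n : ℕ, twoPow (-(δ * n)) + 1,
    ENNReal.add_ne_top.2 ⟨ENNReal.mul_ne_top hK (tsum_twoPow_lt_top hδ0).ne, by simp⟩, ?_⟩
  intro ν hν J
  let f : ℕ → Euc N → ℝ≥0∞ := fun j x => ν (ball x (dyadicRadius j))
  have hf : ∀ j, Measurable (f j) := fun j => measurable_measure_ball ν _
  let m : ℕ → Euc N → ℝ≥0∞ := fun j x => if j < J then 0 else twoPow (G * j) * f j x ^ w
  let A : ℕ → Euc N → ℝ≥0∞ := fun j x => if j < J then 0 else twoPow (a * j) * f j x ^ w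
  let B : ℕ → Euc N → ℝ≥0∞ := fun j x => if j < J then 0 else twoPow (b * j) * f j x ^ w
  have meas : ∀ (c : ℝ) (j : ℕ),
      Measurable fun x => if j < J then 0 else twoPow (c * j) * f j x ^ w := by
    intro c j
    split_ifs
    · exact measurable_const
    · exact ((hf j).pow_const w).const_mul _
  have hA : ∀ x j, A j x = twoPow (-((G - a) * j)) * m j x := by
    intro x j
    simp only [A, m]
    split_ifs
    · simp
    · rw [← mul_assoc, ← twoPow_add]; ring_nf
  have hB : ∀ x j, B j x = twoPow ((b - G) * j) * m j x := by
    intro x j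
    simp only [B, m]
    split_ifs
    · simp
    · rw [← mul_assoc, ← twoPow_add]; ring_nf
  have hterm : ∀ j n : ℕ, ∫⁻ x, twoPow (ε * n) * (A j x ^ q1 * B (j + n) x ^ q2) ≤
      twoPow (-(δ * n)) *
        (if j < J then 0 else scaleEnergy ν (G * (q1 + q2)) ((q1 + q2) * w) j) := by
    intro j n
    rcases lt_or_ge j J with hj | hj
    · simp [A, hj, hq1]
    · have hj' : ¬ j < J := not_lt.2 hj
      have hjn : ¬ j + n < J := by omega
      simp only [A, B, hj', hjn, if_false]
      calc ∫⁻ x, twoPow (ε * n) * ((twoPow (a * j) * f j x ^ w) ^ q1 *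
            (twoPow (b * (j + n : ℕ)) * f (j + n) x ^ w) ^ q2)
          = twoPow (ε * n + a * j * q1 + b * (j + n : ℕ) * q2) *
            ∫⁻ x, f j x ^ (q1 * w) * f (j + n) x ^ (q2 * w) := by
            rw [← lintegral_const_mul' _ _ (twoPow_ne_top _)]
            refine lintegral_congr fun x => ?_
            rw [ENNReal.mul_rpow_of_nonneg _ _ hq1.le, ENNReal.mul_rpow_of_nonneg _ _ hq2.le,
              twoPow_rpow, twoPow_rpow, twoPow_add, twoPow_add, ← ENNReal.rpow_mul,
              ← ENNReal.rpow_mul, mul_comm w, mul_comm w]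
            ring
        _ ≤ twoPow (ε * n + a * j * q1 + b * (j + n : ℕ) * q2) * (twoPow (-(N * l * n : ℝ)) *
            ∫⁻ x, ν (ball x (4 * dyadicRadius j)) ^ (q1 * w + q2 * w)) := by
            gcongr
            have := lintegral_measure_ball_rpow_mul_rpow_le ν (σ1 := q1 * w) (σ2 := q2 * w)
              (by positivity) (by linarith) hl hl1 hlq (dyadicRadius_pos j) n
            rw [← dyadicRadius_add] at this
            exact this
        _ ≤ _ := by
            rw [scaleEnergy, ← mul_assoc, ← mul_assoc, ← twoPow_add, ← twoPow_add, add_mul q1 q2 w]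
            gcongr
            apply twoPow_le
            rw [hG]
            push_cast
            have : ε * n ≤ δ * n := by gcongr
            have h2 : δ * n = (N * l - b * q2) * n - δ * n := by rw [hδ]; ring
            linarith
  calc ∫⁻ x, scaleSum ν a w J x ^ q1 * scaleSum ν b w J x ^ q2
      ≤ ∫⁻ x, (K * ∑' j, ∑' n : ℕ, twoPow (ε * n) * (A j x ^ q1 * B (j + n) x ^ q2) +
          ∑' j, m j x ^ (q1 + q2)) :=
        lintegral_mono fun x => hKle (fun j => m j x) (fun j => A j x) (fun j => B j x)
          (hA x) (hB x)
    _ = K * (∑' j, ∑' n : ℕ, ∫⁻ x, twoPow (ε * n) * (A j x ^ q1 * B (j + n) x ^ q2)) +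
          ∑' j, ∫⁻ x, m j x ^ (q1 + q2) := by
        have mT : ∀ j n : ℕ, Measurable fun x =>
            twoPow (ε * n) * (A j x ^ q1 * B (j + n) x ^ q2) := fun j n =>
          (((meas a j).pow_const q1).mul ((meas b (j + n)).pow_const q2)).const_mul _
        have mS : ∀ j : ℕ, Measurable fun x =>
            ∑' n : ℕ, twoPow (ε * n) * (A j x ^ q1 * B (j + n) x ^ q2) := fun j =>
          Measurable.tsum (mT j)
        rw [lintegral_add_left ((Measurable.tsum mS).const_mul _),
          lintegral_const_mul' _ _ hK, lintegral_tsum fun j => (mS j).aemeasurable,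
          lintegral_tsum fun j => ((meas G j).pow_const _).aemeasurable]
        congr 2
        exact tsum_congr fun j => lintegral_tsum fun n => (mT j n).aemeasurable
    _ ≤ K * ∑' j, ∑' n : ℕ, twoPow (-(δ * n)) *
          (if j < J then 0 else scaleEnergy ν (G * (q1 + q2)) ((q1 + q2) * w) j) +
        ∑' j, if j < J then 0 else scaleEnergy ν (G * (q1 + q2)) ((q1 + q2) * w) j := by
        refine add_le_add (mul_le_mul' le_rfl (ENNReal.tsum_le_tsum fun j =>
          ENNReal.tsum_le_tsum fun n => hterm j n)) (ENNReal.tsum_le_tsum fun j => ?_)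
        simp only [m]
        split_ifs with hj
        · simp [add_pos hq1 hq2]
        · refine le_trans (le_of_eq ?_)
            (twoPow_mul_lintegral_le_scaleEnergy ν (by linarith) j)
          rw [← lintegral_const_mul' _ _ (twoPow_ne_top _)]
          refine lintegral_congr fun x => ?_
          rw [ENNReal.mul_rpow_of_nonneg _ _ (by positivity), twoPow_rpow, ← ENNReal.rpow_mul,
            mul_comm w, mul_right_comm]
    _ = _ := by
        simp_rw [ENNReal.tsum_mul_right, ENNReal.tsum_mul_left]
        ring

lemma exists_lintegral_scaleSum_rpow_le_energy {a G w q : ℝ} (haG : a < G) (hw : 0 < w)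
    (hq : 0 < q) :
    ∃ K : ℝ≥0∞, K ≠ ⊤ ∧ ∀ ν : Measure (Euc N), IsFiniteMeasure ν →
      ∫⁻ x, scaleSum ν a w 0 x ^ q ≤ K * ∑' j, scaleEnergy ν (G * q) (q * w) j := by
  have hε : 0 < (G - a) * q := mul_pos (by linarith) hq
  have hK : (∑' j : ℕ, twoPow (-((G - a) * q / q * j))) ^ q ≠ ⊤ :=
    ENNReal.rpow_ne_top_of_nonneg hq.le (tsum_twoPow_lt_top (by positivity)).ne
  refine ⟨_, hK, fun ν hν => ?_⟩
  calc ∫⁻ x, scaleSum ν a w 0 x ^ q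
      ≤ ∫⁻ x, (∑' j : ℕ, twoPow (-((G - a) * q / q * j))) ^ q *
          ∑' j : ℕ, twoPow (G * q * j) * ν (ball x (dyadicRadius j)) ^ (q * w) := by
        refine lintegral_mono fun x => ?_
        refine (tsum_rpow_le_weighted (ε := (G - a) * q) hq _).trans_eq ?_
        congr 1
        refine tsum_congr fun j => ?_
        rw [if_neg (Nat.not_lt_zero j), ENNReal.mul_rpow_of_nonneg _ _ hq.le, twoPow_rpow,
          ← ENNReal.rpow_mul, ← mul_assoc, ← twoPow_add, mul_comm w]
        ring_nf
    _ ≤ _ := by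
        rw [lintegral_const_mul' _ _ hK, lintegral_tsum fun j =>
          (((measurable_measure_ball ν _).pow_const _).const_mul _).aemeasurable]
        gcongr with j
        rw [lintegral_const_mul' _ _ (twoPow_ne_top _)]
        exact twoPow_mul_lintegral_le_scaleEnergy ν (by positivity) j

lemma exists_lintegral_scaleSum_rpow_le {b w q : ℝ} (hq : 0 < q)
    (hqw : 1 ≤ q * w) (hb : b * q < N) {M : ℝ≥0∞} (hM : M ≠ ⊤) :
    ∃ K : ℝ≥0∞, K ≠ ⊤ ∧ ∀ ν : Measure (Euc N), IsFiniteMeasure ν → ν univ ≤ M →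
      ∫⁻ x, scaleSum ν b w 0 x ^ q ≤ K := by
  set ε := (N - b * q) / 2 with hε
  have hε0 : 0 < ε := by rw [hε]; linarith
  have hK : (∑' j : ℕ, twoPow (-(ε / q * j))) ^ q ≠ ⊤ :=
    ENNReal.rpow_ne_top_of_nonneg hq.le (tsum_twoPow_lt_top (by positivity)).ne
  refine ⟨(∑' j : ℕ, twoPow (-(ε / q * j))) ^ q * ((∑' j : ℕ, twoPow (-(ε * j))) *
    (M ^ (q * w - 1) * (volume (ball (0 : Euc N) 1) * M))), ?_, fun ν hν hνM => ?_⟩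
  · refine ENNReal.mul_ne_top hK (ENNReal.mul_ne_top (tsum_twoPow_lt_top hε0).ne ?_)
    exact ENNReal.mul_ne_top (ENNReal.rpow_ne_top_of_nonneg (by linarith) hM)
      (ENNReal.mul_ne_top measure_ball_lt_top.ne hM)
  calc ∫⁻ x, scaleSum ν b w 0 x ^ q
      ≤ ∫⁻ x, (∑' j : ℕ, twoPow (-(ε / q * j))) ^ q *
          ∑' j : ℕ, twoPow (ε * j + b * q * j) * ν (ball x (dyadicRadius j)) ^ (q * w) := by
        refine lintegral_mono fun x => ?_
        refine (tsum_rpow_le_weighted (ε := ε) hq _).trans_eq ?_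
        congr 1
        refine tsum_congr fun j => ?_
        rw [if_neg (Nat.not_lt_zero j), ENNReal.mul_rpow_of_nonneg _ _ hq.le, twoPow_rpow,
          ← ENNReal.rpow_mul, ← mul_assoc, ← twoPow_add, mul_comm w]
        ring_nf
    _ ≤ _ := by
        rw [lintegral_const_mul' _ _ hK, lintegral_tsum fun j =>
          (((measurable_measure_ball ν _).pow_const _).const_mul _).aemeasurable]
        refine mul_le_mul' le_rfl ?_
        rw [← ENNReal.tsum_mul_right]
        refine ENNReal.tsum_le_tsum fun j => ?_
        rw [lintegral_const_mul' _ _ (twoPow_ne_top _)]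
        calc twoPow (ε * j + b * q * j) * ∫⁻ x, ν (ball x (dyadicRadius j)) ^ (q * w)
            ≤ twoPow (ε * j + b * q * j) *
                ∫⁻ x, M ^ (q * w - 1) * ν (ball x (dyadicRadius j)) := by
              gcongr with x
              conv_lhs => rw [← sub_add_cancel (q * w) 1, ENNReal.rpow_add_of_nonneg _ _
                (by linarith) zero_le_one, ENNReal.rpow_one]
              gcongr
              exact (measure_mono (subset_univ _)).trans hνM
          _ = twoPow (ε * j + b * q * j) * (M ^ (q * w - 1) *
                (twoPow (-(N * j : ℝ)) * volume (ball (0 : Euc N) 1) * ν univ)) := by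
              rw [lintegral_const_mul' _ _ (ENNReal.rpow_ne_top_of_nonneg (by linarith) hM),
                lintegral_measure_ball, ← volume_ball_dyadic 0 0 j 1, mul_one]
          _ = twoPow (-(ε * j)) * (M ^ (q * w - 1) *
                (volume (ball (0 : Euc N) 1) * ν univ)) := by
              have : -(ε * j) = ε * j + b * q * j + -(N * j) := by rw [hε]; ring
              rw [this, twoPow_add (ε * j + b * q * j)]
              ring
          _ ≤ _ := by gcongr

lemma lintegral_Ioi_wolff_tail_lt_top {D w R : ℝ} (hD : 0 < D) (hw : 0 < w) (hR : 0 < R)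
    {M : ℝ≥0∞} (hM : M ≠ ⊤) :
    ∫⁻ ρ in Ioi R, (M / ENNReal.ofReal (ρ ^ D)) ^ w / ENNReal.ofReal ρ < ⊤ := by
  have hint : IntegrableOn (fun ρ : ℝ => ρ ^ (-(D * w) - 1)) (Ioi R) :=
    integrableOn_Ioi_rpow_of_lt (by nlinarith [mul_pos hD hw]) hR
  calc ∫⁻ ρ in Ioi R, (M / ENNReal.ofReal (ρ ^ D)) ^ w / ENNReal.ofReal ρ
      = ∫⁻ ρ in Ioi R, M ^ w * ENNReal.ofReal (ρ ^ (-(D * w) - 1)) := by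
        refine setLIntegral_congr_fun measurableSet_Ioi fun ρ hρ => ?_
        have hρ0 : 0 < ρ := hR.trans hρ
        rw [ENNReal.div_rpow_of_nonneg _ _ hw.le, ENNReal.ofReal_rpow_of_pos (by positivity),
          ← Real.rpow_mul hρ0.le, div_eq_mul_inv, div_eq_mul_inv,
          ← ENNReal.ofReal_inv_of_pos (by positivity), ← ENNReal.ofReal_inv_of_pos hρ0, mul_assoc,
          ← ENNReal.ofReal_mul (by positivity), Real.rpow_sub hρ0, Real.rpow_neg hρ0.le,
          Real.rpow_one, div_eq_mul_inv]
    _ = M ^ w * ∫⁻ ρ in Ioi R, ENNReal.ofReal (ρ ^ (-(D * w) - 1)) :=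
        lintegral_const_mul' _ _ (ENNReal.rpow_ne_top_of_nonneg hw.le hM)
    _ < ⊤ := ENNReal.mul_lt_top (ENNReal.rpow_lt_top_of_nonneg hw.le hM)
        hint.lintegral_lt_top

lemma Ioi_zero_subset_dyadic (J : ℕ) : Ioi (0 : ℝ) ⊆
    (⋃ j : ℕ, if j < J then ∅ else Ioc (dyadicRadius (j + 1)) (dyadicRadius j)) ∪
      Ioi (dyadicRadius J) := by
  intro ρ hρ
  rcases le_or_gt ρ (dyadicRadius J) with h | h
  · left
    obtain ⟨n, hn1, hn2⟩ := exists_nat_pow_near_of_lt_one (y := (1 / 2 : ℝ)) hρ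
      (h.trans (dyadicRadius_le_one J)) (by norm_num) (by norm_num)
    have : ¬ n < J := by
      intro hn
      have : dyadicRadius J ≤ dyadicRadius (n + 1) :=
        pow_le_pow_of_le_one (by norm_num) (by norm_num) hn
      exact absurd (hn1.trans_le h) (not_lt.2 this)
    refine mem_iUnion.2 ⟨n, ?_⟩
    rw [if_neg this]
    exact ⟨hn1, hn2⟩
  · exact Or.inr h

lemma exists_wolff_le_scaleSum {α p : ℝ} (hp : 1 < p) (hD : 0 < (N : ℝ) - α * p) (J : ℕ)
    {M : ℝ≥0∞} (hM : M ≠ ⊤) :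
    ∃ c : ℝ≥0∞, c ≠ ⊤ ∧ ∀ ν : Measure (Euc N), ν univ ≤ M → ∀ x,
      wolff α p ⊤ ν x ≤ twoPow (((N : ℝ) - α * p) * (1 / (p - 1))) *
        scaleSum ν (((N : ℝ) - α * p) * (1 / (p - 1))) (1 / (p - 1)) J x + c := by
  have hw : 0 < 1 / (p - 1) := one_div_pos.2 (by linarith)
  set w := 1 / (p - 1) with hw'
  set D := (N : ℝ) - α * p with hD'
  refine ⟨_, (lintegral_Ioi_wolff_tail_lt_top hD hw (dyadicRadius_pos J) hM).ne,
    fun ν hν x => ?_⟩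
  have hset : {ρ : ℝ | 0 < ρ ∧ ENNReal.ofReal ρ < ⊤} = Ioi 0 := by
    ext ρ; simp
  rw [wolff, hset]
  refine (lintegral_mono_set (Ioi_zero_subset_dyadic J)).trans
    ((lintegral_union_le _ _ _).trans (add_le_add ?_ ?_))
  · refine (lintegral_iUnion_le _ _).trans ?_
    rw [scaleSum, ← ENNReal.tsum_mul_left]
    refine ENNReal.tsum_le_tsum fun j => ?_
    split_ifs with hj
    · simp
    calc ∫⁻ ρ in Ioc (dyadicRadius (j + 1)) (dyadicRadius j),
          (ν (ball x ρ) / ENNReal.ofReal (ρ ^ D)) ^ w / ENNReal.ofReal ρ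
        ≤ ∫⁻ ρ in Ioc (dyadicRadius (j + 1)) (dyadicRadius j),
          (ν (ball x (dyadicRadius j)) / ENNReal.ofReal (dyadicRadius (j + 1) ^ D)) ^ w /
            ENNReal.ofReal (dyadicRadius (j + 1)) := by
          refine setLIntegral_mono' measurableSet_Ioc fun ρ hρ => ?_
          have h1 := hρ.1.le
          have h2 := hρ.2
          have := dyadicRadius_pos (j + 1)
          gcongr
      _ = _ := by
          have hlen : dyadicRadius j - dyadicRadius (j + 1) = dyadicRadius (j + 1) := by
            simp only [dyadicRadius, pow_succ]; ring
          rw [setLIntegral_const, Real.volume_Ioc, hlen, ofReal_dyadicRadius_rpow,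
            ENNReal.div_mul_cancel (by simpa using dyadicRadius_pos _) (by simp),
            twoPow_neg, div_eq_mul_inv, inv_inv, ENNReal.mul_rpow_of_nonneg _ _ hw.le,
            twoPow_rpow, ← mul_assoc, ← twoPow_add, mul_comm]
          push_cast
          ring_nf
  · refine lintegral_mono fun ρ => ?_
    gcongr
    exact (measure_mono (subset_univ _)).trans hν

lemma le_add_tsum_dyadic_layers (z : ℝ≥0∞) (τ : ℕ) :
    z ≤ twoPow τ + ∑' k : ℕ, if twoPow (k + τ : ℕ) < z then twoPow (k + τ + 1 : ℕ) else 0 := by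
  set B := twoPow τ + ∑' k : ℕ, if twoPow (k + τ : ℕ) < z then twoPow (k + τ + 1 : ℕ) else 0
  have hmin : ∀ n : ℕ, min z (twoPow (n + τ : ℕ)) ≤ twoPow τ +
      ∑ k ∈ Finset.range n,
        if twoPow (k + τ : ℕ) < z then twoPow (k + τ + 1 : ℕ) else 0 := by
    intro n
    induction n with
    | zero => simp
    | succ n ih =>
      rw [Finset.sum_range_succ, ← add_assoc]
      split_ifs with h
      · refine (min_le_right _ _).trans ?_
        rw [add_right_comm n 1 τ]
        exact le_add_self
      · rw [add_zero]
        refine le_trans ?_ ih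
        rw [min_eq_left (not_lt.1 h)]
        exact min_le_left _ _
  by_contra! hB
  obtain ⟨n, hn⟩ := ENNReal.exists_nat_gt hB.ne_top
  have h2 : (n : ℝ≥0∞) ≤ twoPow (n + τ : ℕ) := by
    rw [twoPow, ENNReal.rpow_natCast]
    have : n ≤ 2 ^ (n + τ) :=
      Nat.lt_two_pow_self.le.trans (Nat.pow_le_pow_right (by norm_num) (by omega))
    exact_mod_cast this
  have h3 : B < min z (twoPow (n + τ : ℕ)) := lt_min hB (hn.trans_le h2)
  exact absurd (h3.trans_le ((hmin n).trans
    (add_le_add le_rfl (ENNReal.sum_le_tsum _)))) (lt_irrefl _)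

lemma tsum_measure_ball_le_rieszPot {γ : ℝ} (hγ : γ ≤ N) (ν : Measure (Euc N)) (x : Euc N) :
    ∑' j : ℕ, twoPow ((N - γ) * j) * ν (ball x (4 * dyadicRadius j)) ≤
      twoPow (3 * (N - γ) + 1) * rieszPot γ ⊤ ν x := by
  have hanti : Antitone fun j : ℕ => 8 * dyadicRadius j := fun i j hij => by
    have : dyadicRadius j ≤ dyadicRadius i :=
      pow_le_pow_of_le_one (by norm_num) (by norm_num) hij
    simpa using this
  have hsub : (⋃ j : ℕ, Ioc (8 * dyadicRadius (Order.succ j)) (8 * dyadicRadius j)) ⊆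
      {ρ : ℝ | 0 < ρ ∧ ENNReal.ofReal ρ < ⊤} := by
    refine iUnion_subset fun j ρ hρ => ⟨lt_trans ?_ hρ.1, by simp⟩
    have := dyadicRadius_pos (Order.succ j)
    positivity
  rw [rieszPot]
  refine le_trans ?_ (mul_le_mul' le_rfl (lintegral_mono_set hsub))
  rw [lintegral_iUnion (fun j => measurableSet_Ioc) hanti.pairwise_disjoint_on_Ioc_succ,
    ← ENNReal.tsum_mul_left]
  refine ENNReal.tsum_le_tsum fun j => ?_
  have hj := dyadicRadius_pos j
  have hsucc : 8 * dyadicRadius (Order.succ j) = 4 * dyadicRadius j := by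
    rw [Nat.succ_eq_succ, Nat.succ_eq_add_one, dyadicRadius, dyadicRadius, pow_succ]; ring
  have h8 : 8 * dyadicRadius j = (2 : ℝ) ^ (3 - j : ℝ) := by
    rw [dyadicRadius_eq, Real.rpow_sub (by norm_num), Real.rpow_neg (by norm_num)]
    norm_num; ring
  have h4 : 4 * dyadicRadius j = (2 : ℝ) ^ (2 - j : ℝ) := by
    rw [dyadicRadius_eq, Real.rpow_sub (by norm_num), Real.rpow_neg (by norm_num)]
    norm_num; ring
  calc twoPow ((N - γ) * j) * ν (ball x (4 * dyadicRadius j))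
      = twoPow (3 * (N - γ) + 1) *
        ∫⁻ ρ in Ioc (8 * dyadicRadius (Order.succ j)) (8 * dyadicRadius j),
          ν (ball x (4 * dyadicRadius j)) / ENNReal.ofReal ((8 * dyadicRadius j) ^ ((N : ℝ) - γ)) /
            ENNReal.ofReal (8 * dyadicRadius j) := by
        rw [setLIntegral_const, Real.volume_Ioc, hsucc,
          show 8 * dyadicRadius j - 4 * dyadicRadius j = 4 * dyadicRadius j by ring]
        generalize ν (ball x (4 * dyadicRadius j)) = z
        rw [h8, h4, ← Real.rpow_mul (by norm_num), ofReal_two_rpow, ofReal_two_rpow,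
          ofReal_two_rpow, div_eq_mul_inv, div_eq_mul_inv, ← twoPow_neg, ← twoPow_neg]
        rw [show twoPow (3 * (N - γ) + 1) * (z * twoPow (-((3 - j) * (N - γ))) *
          twoPow (-(3 - j)) * twoPow (2 - j)) = (twoPow (3 * (N - γ) + 1) *
          twoPow (-((3 - j) * (N - γ))) * twoPow (-(3 - j)) * twoPow (2 - j)) * z by ring]
        simp only [← twoPow_add]
        ring_nf
    _ ≤ _ := by
        refine mul_le_mul' le_rfl (setLIntegral_mono' measurableSet_Ioc fun ρ hρ => ?_)
        have h1 : 4 * dyadicRadius j ≤ ρ := hsucc ▸ hρ.1.le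
        have h2 := hρ.2
        have : 0 < ρ := lt_of_lt_of_le (by positivity) h1
        gcongr

lemma rieszPot_const_smul {γ : ℝ} (ν : Measure (Euc N)) {c : ℝ≥0∞} (hc : c ≠ ⊤) (x : Euc N) :
    rieszPot γ ⊤ (c • ν) x = c * rieszPot γ ⊤ ν x := by
  rw [rieszPot, rieszPot, ← lintegral_const_mul' _ _ hc]
  refine lintegral_congr fun ρ => ?_
  simp only [Measure.smul_apply, smul_eq_mul, div_eq_mul_inv, mul_assoc]

/-- A capacitary level set estimate. -/
lemma measure_rieszPot_level_le {γ s : ℝ} (hs : 0 ≤ s) (μ : Measure (Euc N)) [IsFiniteMeasure μ]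
    {C : ℝ≥0∞} (hcap : ∀ K, IsCompact K → μ K ≤ C * rieszCap N γ s K)
    {g : Euc N → ℝ≥0∞} (hg : Measurable g) {S : Set (Euc N)} (hS : MeasurableSet S)
    {c : ℝ≥0∞} (hc : c ≠ ⊤)
    (h : ∀ x ∈ S, 1 ≤ c * rieszPot γ ⊤ (volume.withDensity g) x) :
    μ S ≤ C * (c ^ s * ∫⁻ x, g x ^ s) := by
  rw [hS.measure_eq_iSup_isCompact]
  refine iSup₂_le fun K hKS => iSup_le fun hK => (hcap K hK).trans ?_
  gcongr
  rw [← lintegral_const_mul' _ _ (ENNReal.rpow_ne_top_of_nonneg hs hc)]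
  refine (iInf_le _ fun x => c * g x).trans ((iInf_le _ (hg.const_mul c)).trans
    ((iInf_le _ fun x hx => ?_).trans_eq ?_))
  · have := h x (hKS hx)
    rwa [← rieszPot_const_smul _ hc, ← withDensity_smul _ hg] at this
  · simp_rw [ENNReal.mul_rpow_of_nonneg _ _ hs]

lemma tsum_scaleEnergy_lt_top {γ s s' : ℝ} (hγ : γ ≤ N) (hss : s'.HolderConjugate s)
    (μ : Measure (Euc N)) [IsFiniteMeasure μ] {C : ℝ≥0∞} (hC : C ≠ ⊤)
    (hcap : ∀ K, IsCompact K → μ K ≤ C * rieszCap N γ s K) :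
    ∑' j, scaleEnergy μ ((N - γ) * s') s' j < ⊤ := by
  have hs' : 0 < s' := hss.pos
  have hs'1 : 1 < s' := hss.lt
  have hs : 0 < s := hss.symm.pos
  have hs1 : 1 < s := hss.symm.lt
  have hconj : (s' - 1) * s = s' := by
    have := hss.mul_eq_add
    linarith
  set c := twoPow (3 * (N - γ) + 1) with hc
  have hc_top : c ≠ ⊤ := twoPow_ne_top _
  have hL : C * c ^ s * 2 ≠ ⊤ := ENNReal.mul_ne_top
    (ENNReal.mul_ne_top hC (ENNReal.rpow_ne_top_of_nonneg hs.le hc_top)) (by simp)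
  obtain ⟨τ, hτ⟩ : ∃ τ : ℕ,
      C * c ^ s * 2 * ∑' k : ℕ, twoPow (-((s - 1) * (k + τ : ℕ))) ≤ 2⁻¹ := by
    have h := ENNReal.tendsto_sum_nat_add (fun k : ℕ => twoPow (-((s - 1) * k)))
      (tsum_twoPow_lt_top (sub_pos.2 hs1)).ne
    have h2 := ENNReal.Tendsto.const_mul h (Or.inr hL)
    rw [mul_zero] at h2
    exact (h2.eventually_le_const (by simp)).exists
  have bound : ∀ n : ℕ, ∑ j ∈ Finset.range n, scaleEnergy μ ((N - γ) * s') s' j ≤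
      2 * (twoPow τ * μ univ) := by
    intro n
    let F : ℕ → Euc N → ℝ≥0∞ := fun j y => twoPow ((N - γ) * j) * μ (ball y (4 * dyadicRadius j))
    let h : Euc N → ℝ≥0∞ := fun y => ∑ j ∈ Finset.range n, F j y
    have hF : ∀ j, Measurable (F j) := fun j => (measurable_measure_ball μ _).const_mul _
    have hh : Measurable h := Finset.measurable_fun_sum _ fun j _ => hF j
    let g : Euc N → ℝ≥0∞ := fun y => h y ^ (s' - 1)
    have hg : Measurable g := hh.pow_const _
    set X := ∫⁻ y, h y ^ s' with hX
    have hsplit : ∀ z : ℝ≥0∞, z ^ s' = z ^ (s' - 1) * z := fun z => by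
      conv_lhs => rw [← sub_add_cancel s' 1, ENNReal.rpow_add_of_nonneg _ _
        (by linarith) zero_le_one, ENNReal.rpow_one]
    have hgs : ∫⁻ y, g y ^ s = X := by
      simp only [g, ← ENNReal.rpow_mul, hconj, hX]
    have hXfin : X ≠ ⊤ := by
      have hH : ∑ j ∈ Finset.range n, twoPow ((N - γ) * j) * μ univ ≠ ⊤ :=
        ENNReal.sum_ne_top.2 fun j _ =>
          ENNReal.mul_ne_top (twoPow_ne_top _) (measure_ne_top _ _)
      have hHs := ENNReal.rpow_ne_top_of_nonneg (sub_nonneg.2 hs'1.le) hH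
      refine ne_top_of_le_ne_top ?_ (lintegral_mono (g := fun y =>
        (∑ j ∈ Finset.range n, twoPow ((N - γ) * j) * μ univ) ^ (s' - 1) * h y) fun y => ?_)
      · rw [lintegral_const_mul' _ _ hHs, lintegral_finsetSum _ fun j _ => hF j]
        refine ENNReal.mul_ne_top hHs (ENNReal.sum_ne_top.2 fun j _ => ?_)
        rw [lintegral_const_mul' _ _ (twoPow_ne_top _), lintegral_measure_ball]
        exact ENNReal.mul_ne_top (twoPow_ne_top _)
          (ENNReal.mul_ne_top measure_ball_lt_top.ne (measure_ne_top _ _))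
      · simp only [hsplit (h y)]
        gcongr
        exact Finset.sum_le_sum fun j _ =>
          mul_le_mul' le_rfl (measure_mono (subset_univ _))
    let P : Euc N → ℝ≥0∞ := fun z => ∑ j ∈ Finset.range n,
      twoPow ((N - γ) * j) * (volume.withDensity g) (ball z (4 * dyadicRadius j))
    have hPj : ∀ j : ℕ, Measurable fun z =>
        twoPow ((N - γ) * j) * (volume.withDensity g) (ball z (4 * dyadicRadius j)) := fun j =>
      (measurable_measure_ball _ _).const_mul _
    have hP : Measurable P := Finset.measurable_fun_sum _ fun j _ => hPj j
    have hPle : ∀ z, P z ≤ c * rieszPot γ ⊤ (volume.withDensity g) z := fun z =>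
      (ENNReal.sum_le_tsum _).trans (tsum_measure_ball_le_rieszPot hγ _ z)
    have hXP : X = ∫⁻ z, P z ∂μ := by
      rw [lintegral_finsetSum _ fun j _ => hPj j, hX]
      have hgF : ∀ y, h y ^ s' = ∑ j ∈ Finset.range n, g y * F j y := fun y => by
        rw [hsplit, ← Finset.mul_sum]
      simp only [hgF]
      rw [lintegral_finsetSum _ fun j _ => show Measurable fun y => g y * F j y from hg.mul (hF j)]
      refine Finset.sum_congr rfl fun j _ => ?_
      rw [lintegral_const_mul' _ _ (twoPow_ne_top _)]
      simp_rw [withDensity_apply _ measurableSet_ball]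
      rw [← lintegral_mul_measure_ball μ hg, ← lintegral_const_mul' _ _ (twoPow_ne_top _)]
      refine lintegral_congr fun y => ?_
      simp only [F, g, h]
      ring
    have hlevel : ∀ k : ℕ, μ {z | twoPow k < P z} ≤
        C * ((twoPow (-k) * c) ^ s * X) := by
      intro k
      rw [← hgs]
      refine measure_rieszPot_level_le hs.le μ hcap hg (measurableSet_lt measurable_const hP)
        (ENNReal.mul_ne_top (twoPow_ne_top _) hc_top) fun z hz => ?_
      have hz' : twoPow k < P z := hz
      rw [mul_assoc]
      calc (1 : ℝ≥0∞) = twoPow (-k) * twoPow k := by rw [mul_comm, twoPow_mul_neg]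
        _ ≤ _ := by gcongr; exact hz'.le.trans (hPle z)
    have hXle : X ≤ twoPow τ * μ univ + 2⁻¹ * X := by
      calc X = ∫⁻ z, P z ∂μ := hXP
        _ ≤ ∫⁻ z, (twoPow τ + ∑' k : ℕ,
              {z | twoPow (k + τ : ℕ) < P z}.indicator
                (fun _ => twoPow (k + τ + 1 : ℕ)) z) ∂μ := by
            refine lintegral_mono fun z => (le_add_tsum_dyadic_layers (P z) τ).trans_eq ?_
            simp only [indicator, mem_ofPred_eq]
        _ = twoPow τ * μ univ + ∑' k : ℕ,
              twoPow (k + τ + 1 : ℕ) * μ {z | twoPow (k + τ : ℕ) < P z} := by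
            have hm : ∀ k : ℕ, MeasurableSet {z | twoPow (k + τ : ℕ) < P z} := fun k =>
              measurableSet_lt measurable_const hP
            rw [lintegral_add_left measurable_const, lintegral_const, lintegral_tsum fun k =>
              (measurable_const.indicator (hm k)).aemeasurable]
            congr 1
            exact tsum_congr fun k => lintegral_indicator_const (hm k) _
        _ ≤ twoPow τ * μ univ + ∑' k : ℕ, twoPow (k + τ + 1 : ℕ) *
              (C * ((twoPow (-(k + τ : ℕ)) * c) ^ s * X)) := by
            gcongr with k
            exact hlevel (k + τ)
        _ = twoPow τ * μ univ +
              C * c ^ s * 2 * (∑' k : ℕ, twoPow (-((s - 1) * (k + τ : ℕ)))) * X := by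
            rw [← ENNReal.tsum_mul_left, ← ENNReal.tsum_mul_right]
            congr 1
            refine tsum_congr fun k => ?_
            rw [ENNReal.mul_rpow_of_nonneg _ _ hs.le, twoPow_rpow]
            have : twoPow (-((s - 1) * (k + τ : ℕ))) * 2 =
                twoPow (k + τ + 1 : ℕ) * twoPow (-(k + τ : ℕ) * s) := by
              rw [← twoPow_one, ← twoPow_add, ← twoPow_add]
              push_cast
              ring_nf
            calc _ = (twoPow (k + τ + 1 : ℕ) * twoPow (-(k + τ : ℕ) * s)) * (C * c ^ s * X) := by
                  ring
              _ = _ := by rw [← this]; ring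
        _ ≤ _ := by gcongr
    have hX2 : X ≤ 2 * (twoPow τ * μ univ) := by
      have h2 : 2⁻¹ * X + 2⁻¹ * X ≤ twoPow τ * μ univ + 2⁻¹ * X := by
        rwa [← add_mul, ENNReal.inv_two_add_inv_two, one_mul]
      have h3 := (ENNReal.add_le_add_iff_right (ENNReal.mul_ne_top (by simp) hXfin)).1 h2
      calc X = 2 * (2⁻¹ * X) := by
            rw [← mul_assoc, ENNReal.mul_inv_cancel (by simp) (by simp), one_mul]
        _ ≤ _ := by gcongr
    refine le_trans ?_ hX2
    calc ∑ j ∈ Finset.range n, scaleEnergy μ ((N - γ) * s') s' j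
        = ∫⁻ y, ∑ j ∈ Finset.range n, F j y ^ s' := by
          rw [lintegral_finsetSum _ fun j _ => (hF j).pow_const _]
          refine Finset.sum_congr rfl fun j _ => ?_
          rw [scaleEnergy, ← lintegral_const_mul' _ _ (twoPow_ne_top _)]
          refine lintegral_congr fun y => ?_
          rw [ENNReal.mul_rpow_of_nonneg _ _ hs'.le, twoPow_rpow]
          ring_nf
      _ ≤ X := by
          refine lintegral_mono fun y => ?_
          simp only [hsplit]
          change _ ≤ h y ^ (s' - 1) * ∑ j ∈ Finset.range n, F j y
          rw [Finset.mul_sum]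
          refine Finset.sum_le_sum fun j hj => ?_
          gcongr
          exact Finset.single_le_sum (f := fun j => F j y) (fun _ _ => zero_le) hj
  rw [ENNReal.tsum_eq_iSup_nat]
  exact (iSup_le bound).trans_lt (ENNReal.mul_lt_top (by simp)
    (ENNReal.mul_lt_top (twoPow_ne_top _).lt_top (measure_lt_top _ _)))

lemma lintegral_mul_rpow_le_of_lintegral_eq_one {X : Type*} [MeasurableSpace X] {m : Measure X}
    {k h : X → ℝ≥0∞} (hk : Measurable k) (hh : Measurable h) (hk1 : ∫⁻ u, k u ∂m = 1)
    {s : ℝ} (hs : 1 ≤ s) : (∫⁻ u, k u * h u ∂m) ^ s ≤ ∫⁻ u, k u * h u ^ s ∂m := by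
  have hs0 : 0 < s := by linarith
  have hs1 : 0 ≤ 1 - 1 / s := by
    rw [sub_nonneg, div_le_one hs0]
    exact hs
  have hinv : 0 ≤ 1 / s := by positivity
  have key := ENNReal.lintegral_mul_norm_pow_le (μ := m) (f := fun u => k u * h u ^ s) (g := k)
    (hk.mul (hh.pow_const s)).aemeasurable hk.aemeasurable hinv hs1 (by ring)
  rw [hk1, ENNReal.one_rpow, mul_one] at key
  have heq : ∀ u, (k u * h u ^ s) ^ (1 / s) * k u ^ (1 - 1 / s) = k u * h u := fun u => by
    rw [ENNReal.mul_rpow_of_nonneg _ _ hinv, ← ENNReal.rpow_mul, mul_one_div_cancel hs0.ne',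
      ENNReal.rpow_one, mul_right_comm, ← ENNReal.rpow_add_of_nonneg _ _ hinv hs1,
      add_sub_cancel, ENNReal.rpow_one]
  simp only [heq] at key
  calc _ ≤ ((∫⁻ u, k u * h u ^ s ∂m) ^ (1 / s)) ^ s := by gcongr
    _ = _ := by rw [← ENNReal.rpow_mul, one_div_mul_cancel hs0.ne', ENNReal.rpow_one]

lemma setLIntegral_lintegral_sub (μ : Measure (Euc N)) [IsFiniteMeasure μ] {k : Euc N → ℝ≥0∞}
    (hk : Measurable k) {S : Set (Euc N)} (hS : MeasurableSet S) :
    ∫⁻ x in S, ∫⁻ y, k (x - y) ∂μ = ∫⁻ u, k u * μ ((fun y => u + y) ⁻¹' S) := by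
  rw [lintegral_lintegral_swap (by fun_prop)]
  have h1 : ∀ y : Euc N, ∫⁻ x in S, k (x - y) = ∫⁻ u, k u * S.indicator 1 (u + y) := fun y => by
    rw [← lintegral_indicator hS, ← lintegral_sub_right_eq_self (fun u => k u * S.indicator 1 (u + y)) y]
    refine lintegral_congr fun x => ?_
    by_cases hx : x ∈ S <;> simp [hx]
  have hI : Measurable fun q : Euc N × Euc N => S.indicator (1 : Euc N → ℝ≥0∞) (q.2 + q.1) :=
    (measurable_one.indicator hS).comp (by fun_prop)
  simp only [h1]
  rw [lintegral_lintegral_swap ((hk.comp measurable_snd).mul hI).aemeasurable]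
  refine lintegral_congr fun u => ?_
  rw [lintegral_const_mul _ (show Measurable fun y => S.indicator (1 : Euc N → ℝ≥0∞) (u + y) from
      (measurable_one.indicator hS).comp (by fun_prop)),
    ← lintegral_indicator_one (hS.preimage (by fun_prop))]
  rfl

/-- A mollified measure is dominated by an average of translates of the original measure. -/
lemma exists_mollified_apply_le {φ : Euc N → ℝ} (hφ : IsMollifier φ) {n : ℕ} (hn : 0 < n) :
    ∃ k : Euc N → ℝ≥0∞, Measurable k ∧ ∫⁻ u, k u = 1 ∧
      ∀ μ : Measure (Euc N), IsFiniteMeasure μ → ∀ S, MeasurableSet S →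
        mollified φ n μ S ≤ ∫⁻ u, k u * μ ((fun y => u + y) ⁻¹' S) := by
  obtain ⟨hsmooth, hnonneg, -, hint⟩ := hφ
  have hφm : Measurable φ := hsmooth.continuous.measurable
  have hφi : Integrable φ := by
    by_contra h
    rw [integral_undef h] at hint
    exact zero_ne_one hint
  have hn' : (n : ℝ) ≠ 0 := by exact_mod_cast hn.ne'
  have hκm : Measurable fun u : Euc N => (n : ℝ) ^ N * φ ((n : ℝ) • u) := by fun_prop
  have hκ0 : ∀ u : Euc N, 0 ≤ (n : ℝ) ^ N * φ ((n : ℝ) • u) := fun u =>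
    mul_nonneg (by positivity) (hnonneg _)
  refine ⟨fun u => ENNReal.ofReal ((n : ℝ) ^ N * φ ((n : ℝ) • u)), hκm.ennreal_ofReal, ?_,
    fun μ hμ S hS => ?_⟩
  · rw [← ofReal_integral_eq_lintegral_ofReal ((hφi.comp_smul hn').const_mul _)
      (ae_of_all _ hκ0), integral_const_mul, Measure.integral_comp_smul, hint,
      finrank_euclideanSpace_fin, smul_eq_mul, mul_one, abs_of_nonneg (by positivity),
      mul_inv_cancel₀ (by positivity), ENNReal.ofReal_one]
  · rw [← setLIntegral_lintegral_sub μ hκm.ennreal_ofReal hS, mollified, withDensity_apply _ hS]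
    refine lintegral_mono fun x => ?_
    rw [integral_eq_lintegral_of_nonneg_ae (ae_of_all _ fun y => hκ0 (x - y))
      (hκm.comp (by fun_prop : Measurable fun y => x - y)).aestronglyMeasurable]
    exact ENNReal.ofReal_toReal_le

lemma mollified_univ_le {φ : Euc N → ℝ} (hφ : IsMollifier φ) {n : ℕ} (hn : 0 < n)
    (μ : Measure (Euc N)) [IsFiniteMeasure μ] : mollified φ n μ univ ≤ μ univ := by
  obtain ⟨k, hk, hk1, h⟩ := exists_mollified_apply_le hφ hn
  refine (h μ inferInstance univ MeasurableSet.univ).trans_eq ?_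
  simp only [preimage_univ]
  rw [lintegral_mul_const _ hk, hk1, one_mul]

lemma scaleEnergy_mollified_le {φ : Euc N → ℝ} (hφ : IsMollifier φ) {n : ℕ} (hn : 0 < n)
    (μ : Measure (Euc N)) [IsFiniteMeasure μ] (e : ℝ) {s : ℝ} (hs : 1 ≤ s) (j : ℕ) :
    scaleEnergy (mollified φ n μ) e s j ≤ scaleEnergy μ e s j := by
  obtain ⟨k, hk, hk1, h⟩ := exists_mollified_apply_le hφ hn
  set r := 4 * dyadicRadius j with hr
  rw [scaleEnergy, scaleEnergy, ← hr]
  gcongr twoPow (e * j) * ?_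
  have hball := measurable_measure_ball μ r
  have hpre : ∀ y u : Euc N, (fun z => u + z) ⁻¹' ball y r = ball (y - u) r := fun y u => by
    rw [preimage_add_ball]
  calc ∫⁻ y, mollified φ n μ (ball y r) ^ s
      ≤ ∫⁻ y, ∫⁻ u, k u * μ (ball (y - u) r) ^ s := by
        refine lintegral_mono fun y => ?_
        refine le_trans ?_ (lintegral_mul_rpow_le_of_lintegral_eq_one hk
          (hball.comp (by fun_prop : Measurable fun u => y - u)) hk1 hs)
        have := h μ inferInstance (ball y r) measurableSet_ball
        simp only [hpre] at this
        simp only [Function.comp_def]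
        gcongr
    _ = ∫⁻ u, ∫⁻ y, k u * μ (ball (y - u) r) ^ s := by
        refine lintegral_lintegral_swap (Measurable.aemeasurable ?_)
        exact (hk.comp measurable_snd).mul ((hball.comp
          (by fun_prop : Measurable fun q : Euc N × Euc N => q.1 - q.2)).pow_const s)
    _ = ∫⁻ u, k u * ∫⁻ y, μ (ball y r) ^ s := by
        refine lintegral_congr fun u => ?_
        rw [lintegral_const_mul _ (show Measurable fun y => μ (ball (y - u) r) ^ s from (hball.comp
          (by fun_prop : Measurable fun y => y - u)).pow_const s), lintegral_sub_right_eq_self (fun y => μ (ball y r) ^ s) u]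
    _ = ∫⁻ y, μ (ball y r) ^ s := by rw [lintegral_mul_const _ hk, hk1, one_mul]

lemma add_rpow_le_two_rpow_mul (x c : ℝ≥0∞) {q : ℝ} (hq : 0 ≤ q) :
    (x + c) ^ q ≤ 2 ^ q * (x ^ q + c ^ q) := by
  calc (x + c) ^ q ≤ (2 * max x c) ^ q := by
        gcongr
        rw [two_mul]
        exact add_le_add (le_max_left _ _) (le_max_right _ _)
    _ = 2 ^ q * max x c ^ q := ENNReal.mul_rpow_of_nonneg _ _ hq
    _ ≤ _ := by
        gcongr
        rcases le_total x c with h | h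
        · rw [max_eq_right h]; exact le_add_self
        · rw [max_eq_left h]; exact le_self_add

lemma setLIntegral_rpow_le {X : Type*} [MeasurableSpace X] {m : Measure X} {f : X → ℝ≥0∞}
    (hf : Measurable f) {r R : ℝ} (hr : 0 < r) (hrR : r < R) (A : Set X) :
    ∫⁻ x in A, f x ^ r ∂m ≤ (∫⁻ x, f x ^ R ∂m) ^ (r / R) * m A ^ (1 - r / R) := by
  have hR : 0 < R := hr.trans hrR
  have h1 : 0 ≤ 1 - r / R := by
    rw [sub_nonneg, div_le_one hR]
    exact hrR.le
  have h0 : 0 ≤ r / R := by positivity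
  have key := ENNReal.lintegral_mul_norm_pow_le (μ := m.restrict A) (f := fun x => f x ^ R)
    (g := fun _ => 1) (hf.pow_const R).aemeasurable aemeasurable_const h0 h1 (by ring)
  simp only [← ENNReal.rpow_mul, mul_div_cancel₀ r hR.ne', ENNReal.one_rpow, mul_one,
    lintegral_one, Measure.restrict_apply_univ] at key
  refine key.trans ?_
  gcongr
  exact Measure.restrict_le_self

lemma tsum_ite_lt_eq_tsum_add (e : ℕ → ℝ≥0∞) (J : ℕ) :
    (∑' j, if j < J then 0 else e j) = ∑' j, e (j + J) := by
  rw [← (ENNReal.summable (f := fun j => if j + J < J then 0 else e (j + J))).sum_add_tsum_nat_add'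
      (f := fun j => if j < J then 0 else e j) (k := J),
    Finset.sum_eq_zero fun j hj => if_pos (Finset.mem_range.1 hj), zero_add]
  exact tsum_congr fun j => if_neg (by omega)

/-- The product of two Wolff potentials is integrated over a set `A` up to a tail of the dyadic
energies, at the cost of a factor which is small when `A` has small volume. -/
lemma exists_setLIntegral_wolff_mul_wolff_le {α β p q1 q2 γ : ℝ} (hβ : 0 < β)
    (hq1 : 0 < q1) (hq2 : 0 < q2) (hαβ : β < α) (hp : 1 < p)
    (hDα : 0 < (N : ℝ) - α * p) (hDβ : 0 < (N : ℝ) - β * p) (hq : p - 1 < q1 + q2)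
    (hq2' : q2 < (N : ℝ) * (p - 1) / ((N : ℝ) - β * p))
    (hγ : γ * (q1 + q2) = α * p * q1 + β * p * q2)
    {M E : ℝ≥0∞} (hM : M ≠ ⊤) (hE : E ≠ ⊤) :
    ∃ K : ℝ≥0∞, K ≠ ⊤ ∧ ∃ θ1 > (0 : ℝ), ∃ θ2 > (0 : ℝ), ∀ J : ℕ, ∃ L : ℝ≥0∞, L ≠ ⊤ ∧
      ∀ ν : Measure (Euc N), IsFiniteMeasure ν → ν univ ≤ M →
        ∑' j, scaleEnergy ν ((N - γ) * ((q1 + q2) * (1 / (p - 1))))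
          ((q1 + q2) * (1 / (p - 1))) j ≤ E → ∀ A : Set (Euc N),
        ∫⁻ x in A, wolff α p ⊤ ν x ^ q1 * wolff β p ⊤ ν x ^ q2 ≤
          K * (∑' j, scaleEnergy ν ((N - γ) * ((q1 + q2) * (1 / (p - 1))))
            ((q1 + q2) * (1 / (p - 1))) (j + J)) +
          L * (volume A ^ θ1 + volume A ^ θ2 + volume A) := by
  have hp0 : 0 < p - 1 := by linarith
  have hw : 0 < 1 / (p - 1) := by positivity
  have hwp : 1 / (p - 1) * (p - 1) = 1 := by field_simp
  set w := 1 / (p - 1) with hwdef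
  set q := q1 + q2 with hqdef
  have hq0 : 0 < q := by positivity
  set a := ((N : ℝ) - α * p) * w with ha
  set b := ((N : ℝ) - β * p) * w with hb
  have hb0 : 0 < b := mul_pos hDβ hw
  have hαγ : γ < α * p := by
    have : γ * q < α * p * q := by
      rw [hγ, hqdef]
      have : β * p * q2 < α * p * q2 := by gcongr
      nlinarith
    exact lt_of_mul_lt_mul_right this hq0.le
  have hγβ : β * p < γ := by
    have : β * p * q < γ * q := by
      rw [hγ, hqdef]
      have : β * p * q1 < α * p * q1 := by gcongr
      nlinarith
    exact lt_of_mul_lt_mul_right this hq0.le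
  have haG : a < (N - γ) * w := by rw [ha]; gcongr
  have hGb : (N - γ) * w < b := by rw [hb]; gcongr
  have hs : 1 ≤ q * w := by
    rw [← hwp, mul_comm w]
    gcongr
  have hT : ∀ z, z < (N : ℝ) * (p - 1) / ((N : ℝ) - β * p) → b * z < N := fun z hz => by
    rw [lt_div_iff₀ hDβ] at hz
    calc b * z = z * (N - β * p) * w := by rw [hb]; ring
      _ < N * (p - 1) * w := by gcongr
      _ = N := by rw [mul_assoc, mul_comm (p - 1), hwp, mul_one]
  have hbN : b < N * w := by
    rw [hb]
    gcongr
    have : 0 < β * p := by positivity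
    linarith
  have hbl : b * q2 < N * min 1 (q2 * w) := by
    rcases min_choice 1 (q2 * w) with h | h <;> rw [h]
    · rw [mul_one]; exact hT q2 hq2'
    · calc b * q2 < N * w * q2 := by gcongr
        _ = _ := by ring
  have hpT : p - 1 < (N : ℝ) * (p - 1) / ((N : ℝ) - β * p) := by
    rw [lt_div_iff₀ hDβ]
    have : 0 < β * p * (p - 1) := by positivity
    linarith
  obtain ⟨q3, hq3, hq3T⟩ := exists_between (max_lt hq2' hpT)
  have hq23 : q2 < q3 := (le_max_left _ _).trans_lt hq3
  have hq30 : 0 < q3 := hq2.trans hq23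
  have hq3w : 1 ≤ q3 * w := by
    rw [← hwp, mul_comm w]
    have : p - 1 ≤ q3 := ((le_max_right _ _).trans_lt hq3).le
    gcongr
  have hq1q : q1 < q := by rw [hqdef]; linarith
  obtain ⟨K1, hK1, hprod⟩ := exists_lintegral_scaleSum_mul_le (N := N) haG hGb hw hq1 hq2 hs
    (by rw [ha, hb]; linear_combination (-w) * hγ) (lt_min one_pos (mul_pos hq2 hw))
    (min_le_left _ _) (min_le_right _ _) hbl
  obtain ⟨K2, hK2, hU⟩ := exists_lintegral_scaleSum_rpow_le_energy (N := N) haG hw hq0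
  obtain ⟨K3, hK3, hV⟩ := exists_lintegral_scaleSum_rpow_le (N := N) hq30 hq3w (hT q3 hq3T) hM
  have hexp : (N - γ) * w * q = (N - γ) * (q * w) := by ring
  rw [← hqdef, hexp] at hprod
  rw [hexp] at hU
  have hfin : ∀ (z : ℝ≥0∞) {r : ℝ}, 0 < r → z ≠ ⊤ → z ^ r ≠ ⊤ := fun z r hr hz =>
    ENNReal.rpow_ne_top_of_nonneg hr.le hz
  have hA1 := hfin _ hq1 (twoPow_ne_top a)
  have hA2 := hfin _ hq2 (twoPow_ne_top b)
  have h21 := hfin 2 hq1 (by simp)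
  have h22 := hfin 2 hq2 (by simp)
  set D := (2 : ℝ≥0∞) ^ q1 * 2 ^ q2 with hD
  have hDt : D ≠ ⊤ := ENNReal.mul_ne_top h21 h22
  refine ⟨D * (twoPow a ^ q1 * twoPow b ^ q2) * K1,
    ENNReal.mul_ne_top (ENNReal.mul_ne_top hDt (ENNReal.mul_ne_top hA1 hA2)) hK1,
    1 - q1 / q, ?_, 1 - q2 / q3, ?_, fun J => ?_⟩
  · rw [gt_iff_lt, sub_pos, div_lt_one hq0]; exact hq1q
  · rw [gt_iff_lt, sub_pos, div_lt_one hq30]; exact hq23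
  obtain ⟨c, hc, hWα⟩ := exists_wolff_le_scaleSum hp hDα J hM
  obtain ⟨c', hc', hWβ⟩ := exists_wolff_le_scaleSum hp hDβ J hM
  have hcq := hfin _ hq1 hc
  have hcq' := hfin _ hq2 hc'
  have hKE := hfin (K2 * E) (div_pos hq1 hq0) (ENNReal.mul_ne_top hK2 hE)
  have hKV := hfin K3 (div_pos hq2 hq30) hK3
  set L1 := D * (twoPow a ^ q1 * c' ^ q2) with hL1
  set L2 := D * (c ^ q1 * twoPow b ^ q2) with hL2
  set L3 := D * (c ^ q1 * c' ^ q2) with hL3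
  have hL1t : L1 ≠ ⊤ := ENNReal.mul_ne_top hDt (ENNReal.mul_ne_top hA1 hcq')
  have hL2t : L2 ≠ ⊤ := ENNReal.mul_ne_top hDt (ENNReal.mul_ne_top hcq hA2)
  have hL3t : L3 ≠ ⊤ := ENNReal.mul_ne_top hDt (ENNReal.mul_ne_top hcq hcq')
  refine ⟨L1 * (K2 * E) ^ (q1 / q) + L2 * K3 ^ (q2 / q3) + L3, ENNReal.add_ne_top.2
    ⟨ENNReal.add_ne_top.2 ⟨ENNReal.mul_ne_top hL1t hKE, ENNReal.mul_ne_top hL2t hKV⟩, hL3t⟩,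
    fun ν hν hνM hνE A => ?_⟩
  set U := scaleSum ν a w with hUdef
  set V := scaleSum ν b w with hVdef
  have hUm : ∀ J, Measurable (U J) := measurable_scaleSum ν a w
  have hVm : ∀ J, Measurable (V J) := measurable_scaleSum ν b w
  have hpt : ∀ x, wolff α p ⊤ ν x ^ q1 * wolff β p ⊤ ν x ^ q2 ≤
      D * (twoPow a ^ q1 * twoPow b ^ q2) * (U J x ^ q1 * V J x ^ q2) +
        (L1 * U 0 x ^ q1 + (L2 * V 0 x ^ q2 + L3)) := fun x => by
    have h1 : wolff α p ⊤ ν x ^ q1 ≤ 2 ^ q1 * (twoPow a ^ q1 * U J x ^ q1 + c ^ q1) := by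
      rw [← ENNReal.mul_rpow_of_nonneg _ _ hq1.le]
      exact (ENNReal.rpow_le_rpow (hWα ν hνM x) hq1.le).trans
        (add_rpow_le_two_rpow_mul _ _ hq1.le)
    have h2 : wolff β p ⊤ ν x ^ q2 ≤ 2 ^ q2 * (twoPow b ^ q2 * V J x ^ q2 + c' ^ q2) := by
      rw [← ENNReal.mul_rpow_of_nonneg _ _ hq2.le]
      exact (ENNReal.rpow_le_rpow (hWβ ν hνM x) hq2.le).trans
        (add_rpow_le_two_rpow_mul _ _ hq2.le)
    calc _ ≤ _ := mul_le_mul' h1 h2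
      _ = D * (twoPow a ^ q1 * twoPow b ^ q2) * (U J x ^ q1 * V J x ^ q2) +
          (L1 * U J x ^ q1 + (L2 * V J x ^ q2 + L3)) := by
          rw [hL1, hL2, hL3, hD]; ring
      _ ≤ _ := by
          gcongr
          · exact scaleSum_le ν a w J x
          · exact scaleSum_le ν b w J x
  have hUA : ∫⁻ x in A, U 0 x ^ q1 ≤ (K2 * E) ^ (q1 / q) * volume A ^ (1 - q1 / q) :=
    (setLIntegral_rpow_le (hUm 0) hq1 hq1q A).trans (by
      gcongr
      exact (hU ν hν).trans (by gcongr))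
  have hVA : ∫⁻ x in A, V 0 x ^ q2 ≤ K3 ^ (q2 / q3) * volume A ^ (1 - q2 / q3) :=
    (setLIntegral_rpow_le (hVm 0) hq2 hq23 A).trans (by
      gcongr
      exact hV ν hν hνM)
  have hUV : ∫⁻ x in A, U J x ^ q1 * V J x ^ q2 ≤
      K1 * ∑' j, scaleEnergy ν ((N - γ) * (q * w)) (q * w) (j + J) := by
    rw [← tsum_ite_lt_eq_tsum_add]
    exact (setLIntegral_le_lintegral _ _).trans (hprod ν hν J)
  have hm1 : Measurable fun x => U J x ^ q1 * V J x ^ q2 :=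
    ((hUm J).pow_const _).mul ((hVm J).pow_const _)
  calc ∫⁻ x in A, wolff α p ⊤ ν x ^ q1 * wolff β p ⊤ ν x ^ q2
      ≤ ∫⁻ x in A, (D * (twoPow a ^ q1 * twoPow b ^ q2) * (U J x ^ q1 * V J x ^ q2) +
        (L1 * U 0 x ^ q1 + (L2 * V 0 x ^ q2 + L3))) := lintegral_mono hpt
    _ = D * (twoPow a ^ q1 * twoPow b ^ q2) * (∫⁻ x in A, U J x ^ q1 * V J x ^ q2) +
        (L1 * (∫⁻ x in A, U 0 x ^ q1) + (L2 * (∫⁻ x in A, V 0 x ^ q2) + L3 * volume A)) := by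
        have hU0 := (hUm 0).pow_const q1
        have hV0 := (hVm 0).pow_const q2
        rw [lintegral_add_left (hm1.const_mul _), lintegral_const_mul _ hm1,
          lintegral_add_left (hU0.const_mul _), lintegral_const_mul _ hU0,
          lintegral_add_left (hV0.const_mul _), lintegral_const_mul _ hV0, setLIntegral_const]
    _ ≤ D * (twoPow a ^ q1 * twoPow b ^ q2) *
          (K1 * ∑' j, scaleEnergy ν ((N - γ) * (q * w)) (q * w) (j + J)) +
        (L1 * ((K2 * E) ^ (q1 / q) * volume A ^ (1 - q1 / q)) +
          (L2 * (K3 ^ (q2 / q3) * volume A ^ (1 - q2 / q3)) + L3 * volume A)) := by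
        gcongr
    _ ≤ _ := by
        rw [mul_assoc _ K1]
        gcongr
        set v1 := volume A ^ (1 - q1 / q)
        set v2 := volume A ^ (1 - q2 / q3)
        calc L1 * ((K2 * E) ^ (q1 / q) * v1) + (L2 * (K3 ^ (q2 / q3) * v2) + L3 * volume A)
            = L1 * (K2 * E) ^ (q1 / q) * v1 + L2 * K3 ^ (q2 / q3) * v2 + L3 * volume A := by ring
          _ ≤ (L1 * (K2 * E) ^ (q1 / q) + L2 * K3 ^ (q2 / q3) + L3) * v1 +
              (L1 * (K2 * E) ^ (q1 / q) + L2 * K3 ^ (q2 / q3) + L3) * v2 +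
              (L1 * (K2 * E) ^ (q1 / q) + L2 * K3 ^ (q2 / q3) + L3) * volume A := by
              gcongr
              · exact le_self_add.trans le_self_add
              · exact le_add_self.trans le_self_add
              · exact le_add_self
          _ = _ := by ring

end Potentials

/-- Equi-integrability of products of Wolff potentials of
mollifications of a compactly supported measure satisfying the capacitary
Lipschitz estimate. -/
theorem stmt16 (N : ℕ) (α β p q1 q2 C : ℝ) (hα : 0 < α) (hβ : 0 < β)
    (hq1 : 0 < q1) (hq2 : 0 < q2) (hαβ : β < α)
    (hp : 1 < p) (hpα : p < (N : ℝ) / α) (hpβ : p < (N : ℝ) / β)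
    (hq : p - 1 < q1 + q2) (hq2' : q2 < (N : ℝ) * (p - 1) / ((N : ℝ) - β * p))
    (hγ : (α * p * q1 + β * p * q2) / (q1 + q2) < (N : ℝ))
    (μ : Measure (Euc N)) [IsLocallyFiniteMeasure μ]
    (hcs : ∃ K : Set (Euc N), IsCompact K ∧ μ Kᶜ = 0)
    (hC : 0 < C)
    (hcap : ∀ K : Set (Euc N), IsCompact K →
      μ K ≤ ENNReal.ofReal C *
        rieszCap N ((α * p * q1 + β * p * q2) / (q1 + q2))
          ((q1 + q2) / (q1 + q2 - p + 1)) K)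
    (φ : Euc N → ℝ) (hφ : IsMollifier φ) :
    ∀ t : ℝ, 1 < t →
      (∀ n : ℕ, 0 < n →
        (∫⁻ x in ball (0 : Euc N) t,
          (wolff α p ⊤ (mollified φ n μ) x) ^ q1 *
            (wolff β p ⊤ (mollified φ n μ) x) ^ q2) < ⊤) ∧
      (∀ ε : ℝ, 0 < ε → ∃ δ > 0, ∀ n : ℕ, 0 < n →
        ∀ A : Set (Euc N), MeasurableSet A → A ⊆ ball (0 : Euc N) t →
          volume A < ENNReal.ofReal δ →
          (∫⁻ x in A,
            (wolff α p ⊤ (mollified φ n μ) x) ^ q1 *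
              (wolff β p ⊤ (mollified φ n μ) x) ^ q2) < ENNReal.ofReal ε) := by
  have hp0 : 0 < p - 1 := by linarith
  have hq0 : 0 < q1 + q2 := by linarith
  have hDα : 0 < (N : ℝ) - α * p := by
    rw [lt_div_iff₀ hα] at hpα
    linarith
  have hDβ : 0 < (N : ℝ) - β * p := by
    rw [lt_div_iff₀ hβ] at hpβ
    linarith
  have hμ : IsFiniteMeasure μ := by
    obtain ⟨K, hK, hK0⟩ := hcs
    refine ⟨?_⟩
    rw [← union_compl_self K]
    exact (measure_union_le _ _).trans_lt (by rw [hK0, add_zero]; exact hK.measure_lt_top)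
  set γ := (α * p * q1 + β * p * q2) / (q1 + q2) with hγdef
  have hγq : γ * (q1 + q2) = α * p * q1 + β * p * q2 := div_mul_cancel₀ _ hq0.ne'
  have hs1 : 1 < (q1 + q2) * (1 / (p - 1)) := by
    rw [mul_one_div, one_lt_div hp0]
    exact hq
  have hconj : ((q1 + q2) * (1 / (p - 1))).HolderConjugate
      ((q1 + q2) / (q1 + q2 - p + 1)) := by
    refine Real.holderConjugate_iff.2 ⟨hs1, ?_⟩
    rw [mul_one_div, inv_div, inv_div, ← add_div, div_eq_one_iff_eq hq0.ne']
    ring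
  have hE := tsum_scaleEnergy_lt_top hγ.le hconj μ ENNReal.ofReal_ne_top hcap
  set e := (N - γ) * ((q1 + q2) * (1 / (p - 1))) with he
  set s := (q1 + q2) * (1 / (p - 1)) with hs
  obtain ⟨K, hK, θ1, hθ1, θ2, hθ2, hbound⟩ := exists_setLIntegral_wolff_mul_wolff_le hβ hq1 hq2
    hαβ hp hDα hDβ hq hq2' hγq (measure_ne_top μ univ) hE.ne
  have hmain : ∀ J : ℕ, ∃ L : ℝ≥0∞, L ≠ ⊤ ∧ ∀ n : ℕ, 0 < n → ∀ A : Set (Euc N),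
      (∫⁻ x in A, (wolff α p ⊤ (mollified φ n μ) x) ^ q1 *
        (wolff β p ⊤ (mollified φ n μ) x) ^ q2) ≤
      K * (∑' j, scaleEnergy μ e s (j + J)) +
        L * (volume A ^ θ1 + volume A ^ θ2 + volume A) := by
    intro J
    obtain ⟨L, hL, h⟩ := hbound J
    refine ⟨L, hL, fun n hn A => ?_⟩
    have huniv := mollified_univ_le hφ hn μ
    have hle := scaleEnergy_mollified_le hφ hn μ e hs1.le
    refine (h _ ⟨huniv.trans_lt (measure_lt_top _ _)⟩ huniv
      (ENNReal.tsum_le_tsum hle) A).trans ?_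
    gcongr with j
    exact hle (j + J)
  intro t _
  constructor
  · intro n hn
    obtain ⟨L, hL, h⟩ := hmain 0
    refine (h n hn _).trans_lt ?_
    have hball : volume (ball (0 : Euc N) t) ≠ ⊤ := measure_ball_lt_top.ne
    exact ENNReal.add_lt_top.2 ⟨ENNReal.mul_lt_top hK.lt_top hE, ENNReal.mul_lt_top hL.lt_top
      (ENNReal.add_lt_top.2 ⟨ENNReal.add_lt_top.2
        ⟨(ENNReal.rpow_ne_top_of_nonneg hθ1.le hball).lt_top,
          (ENNReal.rpow_ne_top_of_nonneg hθ2.le hball).lt_top⟩, hball.lt_top⟩)⟩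
  · intro ε hε
    have hε2 : (0 : ℝ≥0∞) < ENNReal.ofReal (ε / 2) := ENNReal.ofReal_pos.2 (half_pos hε)
    obtain ⟨J, hJ⟩ : ∃ J : ℕ, K * (∑' j, scaleEnergy μ e s (j + J)) < ENNReal.ofReal (ε / 2) := by
      have h := ENNReal.Tendsto.const_mul (ENNReal.tendsto_sum_nat_add _ hE.ne) (Or.inr hK)
      rw [mul_zero] at h
      exact (h.eventually_lt_const hε2).exists
    obtain ⟨L, hL, h⟩ := hmain J
    have hcont : Tendsto (fun v : ℝ≥0∞ => L * (v ^ θ1 + v ^ θ2 + v)) (𝓝 0) (𝓝 0) := by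
      have h0 : ∀ {θ : ℝ}, 0 < θ → Tendsto (fun v : ℝ≥0∞ => v ^ θ) (𝓝 0) (𝓝 0) := fun {θ} hθ => by
        have := (ENNReal.continuous_rpow_const (y := θ)).tendsto 0
        rwa [ENNReal.zero_rpow_of_pos hθ] at this
      simpa using ENNReal.Tendsto.const_mul (((h0 hθ1).add (h0 hθ2)).add tendsto_id) (Or.inr hL)
    obtain ⟨d, hd0, hd⟩ := ENNReal.nhds_zero_basis.eventually_iff.1
      (hcont.eventually_lt_const hε2)
    obtain ⟨δ, hδ0, hδ⟩ := ENNReal.lt_iff_exists_nnreal_btwn.1 hd0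
    refine ⟨δ, by exact_mod_cast hδ0, fun n hn A _ _ hAδ => (h n hn A).trans_lt ?_⟩
    rw [ENNReal.ofReal_coe_nnreal] at hAδ
    calc _ < ENNReal.ofReal (ε / 2) + ENNReal.ofReal (ε / 2) :=
          ENNReal.add_lt_add hJ (hd (hAδ.trans hδ))
      _ = ENNReal.ofReal ε := by
          rw [← ENNReal.ofReal_add (by positivity) (by positivity), add_halves]
end
end

section
/- Let α>0, 1<p<N/α and q>p−1. Let μ be a nonnegative Radon measure on ℝ^N such that for some C>0, ∫_{ℝ^N} (W_{α,p}[χ_{B_t(x)}μ](y))^q dy ≤ C·μ(B_t(x)) for every x∈ℝ^N and t>0. Then there exists a constant C'>0, depending only on N,α,p,q,C, such that μ(B_t(x)) ≤ C'·t^{N − αpq/(q−p+1)} for every x∈ℝ^N and t>0. -/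
open MeasureTheory Metric Set Filter Bornology
open scoped ENNReal NNReal Topology RealInnerProductSpace

noncomputable section

/-- On a ball, the Wolff potential of the restricted measure is bounded below by the
mass of the ball at its own scale. -/
theorem half_mul_rpow_le_wolff_restrict {N : ℕ} {α p t : ℝ} (hp : 1 < p)
    (hN : 0 ≤ (N : ℝ) - α * p) (ht : 0 < t) (μ : Measure (Euc N)) {x y : Euc N}
    (hy : y ∈ ball x t) :
    ENNReal.ofReal (1 / 2) *
        (μ (ball x t) / ENNReal.ofReal ((4 * t) ^ ((N : ℝ) - α * p))) ^ (1 / (p - 1)) ≤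
      wolff α p ⊤ (μ.restrict (ball x t)) y := by
  have hp' : 0 ≤ 1 / (p - 1) := by
    have : 0 < p - 1 := by linarith
    positivity
  set A := (μ (ball x t) / ENNReal.ofReal ((4 * t) ^ ((N : ℝ) - α * p))) ^ (1 / (p - 1)) with hA
  have hsub : Ioo (2 * t) (4 * t) ⊆ {ρ : ℝ | 0 < ρ ∧ ENNReal.ofReal ρ < ⊤} := fun ρ hρ =>
    ⟨by linarith [hρ.1], ENNReal.ofReal_lt_top⟩
  calc ENNReal.ofReal (1 / 2) * A
      = ∫⁻ _ in Ioo (2 * t) (4 * t), A / ENNReal.ofReal (4 * t) := by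
        rw [setLIntegral_const, Real.volume_Ioo, div_eq_mul_inv A, mul_assoc,
          ← ENNReal.ofReal_inv_of_pos (by positivity), ← ENNReal.ofReal_mul (by positivity),
          mul_comm]
        congr 2
        field_simp
        norm_num
    _ ≤ ∫⁻ ρ in Ioo (2 * t) (4 * t),
          ((μ.restrict (ball x t)) (ball y ρ) / ENNReal.ofReal (ρ ^ ((N : ℝ) - α * p))) ^
            (1 / (p - 1)) / ENNReal.ofReal ρ := by
        refine setLIntegral_mono' measurableSet_Ioo fun ρ hρ => ?_
        have hball : ball x t ⊆ ball y ρ :=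
          ball_subset_ball' (by linarith [hρ.1, mem_ball'.1 hy])
        rw [Measure.restrict_apply measurableSet_ball, inter_eq_right.2 hball]
        have hρ0 : 0 ≤ ρ := by linarith [hρ.1]
        have hle : ρ ≤ 4 * t := hρ.2.le
        rw [hA]
        gcongr
    _ ≤ _ := lintegral_mono_set hsub

/-- Solving the power inequality `v * tⁿ * (½ (m / (4t)ᵇ)^(1/r))^q ≤ C * m` for `m`. -/
theorem le_mul_rpow_of_mul_rpow_le {n b r q C v m t : ℝ} (hr : 0 < r) (hq : r < q)
    (hC : 0 < C) (hv : 0 < v) (hm : 0 < m) (ht : 0 < t)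
    (h : t ^ n * v * (1 / 2 * (m / (4 * t) ^ b) ^ (1 / r)) ^ q ≤ C * m) :
    m ≤ (C * 2 ^ q * 4 ^ (b * q / r) / v) ^ (r / (q - r)) *
      t ^ ((b * q - n * r) / (q - r)) := by
  have hqr : 0 < q - r := sub_pos.2 hq
  have hexp : (1 / 2 * (m / (4 * t) ^ b) ^ (1 / r)) ^ q =
      m ^ ((q - r) / r) * m / (2 ^ q * (4 ^ (b * q / r) * t ^ (b * q / r))) := by
    rw [Real.mul_rpow (by positivity) (by positivity), ← Real.rpow_mul (by positivity),
      Real.div_rpow hm.le (by positivity), ← Real.rpow_mul (by positivity),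
      Real.mul_rpow (by norm_num) ht.le, Real.div_rpow (by norm_num) (by norm_num),
      Real.one_rpow, ← Real.rpow_add_one hm.ne',
      show (q - r) / r + 1 = 1 / r * q by field_simp; ring,
      show b * (1 / r * q) = b * q / r by ring]
    field_simp
  have hpow : m ^ ((q - r) / r) ≤
      C * 2 ^ q * 4 ^ (b * q / r) / v * t ^ (b * q / r - n) := by
    rw [hexp] at h
    rw [Real.rpow_sub ht, div_mul_div_comm, le_div_iff₀ (by positivity)]
    have h' : (m ^ ((q - r) / r) * (v * t ^ n)) * m ≤
        (C * 2 ^ q * 4 ^ (b * q / r) * t ^ (b * q / r)) * m := by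
      rw [← mul_div_assoc, div_le_iff₀ (by positivity)] at h
      linarith
    exact le_of_mul_le_mul_right h' hm
  have hfin := Real.rpow_le_rpow (by positivity) hpow (div_pos hr hqr).le
  rw [← Real.rpow_mul hm.le, Real.mul_rpow (by positivity) (by positivity),
    ← Real.rpow_mul ht.le, show (q - r) / r * (r / (q - r)) = 1 by field_simp, Real.rpow_one,
    show (b * q / r - n) * (r / (q - r)) = (b * q - n * r) / (q - r) by field_simp] at hfin
  exact hfin

/-- The ball-wise Wolff potential testing inequality implies a
growth estimate on the measure of balls. -/
theorem stmt19 (N : ℕ) (α p q : ℝ) (hα : 0 < α) (hp : 1 < p) (hpN : p < (N : ℝ) / α)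
    (hq : p - 1 < q) :
    ∀ C : ℝ, 0 < C → ∃ C' > 0, ∀ μ : Measure (Euc N), IsLocallyFiniteMeasure μ →
      (∀ (x : Euc N) (t : ℝ), 0 < t →
        (∫⁻ y, (wolff α p ⊤ (μ.restrict (ball x t)) y) ^ q) ≤
          ENNReal.ofReal C * μ (ball x t)) →
      ∀ (x : Euc N) (t : ℝ), 0 < t →
        μ (ball x t) ≤
          ENNReal.ofReal (C' * t ^ ((N : ℝ) - α * p * q / (q - p + 1))) := by
  intro C hC
  have hp0 : 0 < p - 1 := sub_pos.2 hp
  have hq0 : 0 < q := hp0.trans hq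
  have hb : 0 < (N : ℝ) - α * p := by
    rw [lt_div_iff₀ hα] at hpN
    linarith
  set v := (volume (ball (0 : Euc N) 1)).toReal with hv
  have hvtop : volume (ball (0 : Euc N) 1) ≠ ∞ := measure_ball_lt_top.ne
  have hv0 : 0 < v := ENNReal.toReal_pos (measure_ball_pos _ _ one_pos).ne' hvtop
  refine ⟨(C * 2 ^ q * 4 ^ (((N : ℝ) - α * p) * q / (p - 1)) / v) ^ ((p - 1) / (q - (p - 1))),
    by positivity, fun μ _ H x t ht => ?_⟩
  have hmtop : μ (ball x t) ≠ ∞ := measure_ball_lt_top.ne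
  rw [← ENNReal.ofReal_toReal hmtop]
  refine ENNReal.ofReal_le_ofReal ?_
  rcases (ENNReal.toReal_nonneg (a := μ (ball x t))).eq_or_lt with hm | hm
  · rw [← hm]
    positivity
  have hexp : (N : ℝ) - α * p * q / (q - p + 1) =
      (((N : ℝ) - α * p) * q - N * (p - 1)) / (q - (p - 1)) := by
    have : q - (p - 1) ≠ 0 := (sub_pos.2 hq).ne'
    rw [show q - p + 1 = q - (p - 1) by ring]
    field_simp
    ring
  rw [hexp]
  refine le_mul_rpow_of_mul_rpow_le hp0 hq hC hv0 hm ht ?_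
  have hlow : volume (ball x t) * (ENNReal.ofReal (1 / 2) *
      (μ (ball x t) / ENNReal.ofReal ((4 * t) ^ ((N : ℝ) - α * p))) ^ (1 / (p - 1))) ^ q ≤
      ENNReal.ofReal C * μ (ball x t) := by
    refine le_trans ?_ (H x t ht)
    rw [mul_comm, ← setLIntegral_const]
    refine le_trans (setLIntegral_mono' measurableSet_ball fun y hy => ?_)
      (setLIntegral_le_lintegral (ball x t) _)
    exact ENNReal.rpow_le_rpow (half_mul_rpow_le_wolff_restrict hp hb.le ht μ hy) hq0.le
  have hreal := ENNReal.toReal_mono (ENNReal.mul_ne_top ENNReal.ofReal_ne_top hmtop) hlow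
  rw [Measure.addHaar_ball_of_pos volume x ht] at hreal
  have h4 : 0 ≤ (4 * t) ^ ((N : ℝ) - α * p) := by positivity
  simpa [ENNReal.toReal_mul, ← ENNReal.toReal_rpow, ENNReal.toReal_div, hC.le, ht.le,
    ENNReal.toReal_ofReal h4, ← hv] using hreal
end
end
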